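/- Let k be an algebraically closed field of characteristic 0 or p > 2, m an even positive integer not divisible by the characteristic of k, ζ ∈ k a primitive m-th root of unity, and n ≥ 2. Let u ∈ O(2n,k) be such that m is the least positive integer j with u^j ∈ {I, −I} (so Int u has order m as an automorphism of SO(2n,k)). Set 𝔤(1) = {x ∈ so(2n,k) : u·x·u⁻¹ = ζ·x} and H = {h ∈ SO(2n,k) : h·u = u·h}. Let c be a Cartan subspace of 𝔤(1) and r = dim c. If u^m = −I, then with respect to a suitable basis of c the little Weyl group of c with respect to H equals G(m,1,r). If u^m = I, then it equals G(m,1,r) when n > mr/2 and there exists x ∈ O(2n,k) with det x = −1 such that x·u = u·x and x commutes with every element of c, and it equals G(m,2,r) otherwise. -/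

import Mathlib

open Matrix

/-- The group `G(m,q,r)` of `r×r` monomial matrices whose nonzero entries are
`m`-th roots of unity and the product of whose nonzero entries is an
`(m/q)`-th root of unity, as a set of matrices. -/
def GmqrSet (k : Type*) [Field k] (m q r : ℕ) : Set (Matrix (Fin r) (Fin r) k) :=
  {w | ∃ σ : Equiv.Perm (Fin r),
    (∀ i j, i ≠ σ j → w i j = 0) ∧
    (∀ j, w (σ j) j ^ m = 1) ∧
    (∏ j, w (σ j) j) ^ (m / q) = 1}

/-- A matrix is semisimple if it is diagonalizable. -/
def IsSemisimpleMat {k : Type*} [Field k] {N : Type*} [Fintype N] [DecidableEq N]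
    (x : Matrix N N k) : Prop :=
  ∃ P : Matrix N N k, IsUnit P.det ∧ (P * x * P⁻¹).IsDiag

/-- `c` is a Cartan subspace of `g1`: a subspace of `g1`, consisting of
pairwise commuting diagonalizable matrices, and maximal among such. -/
def IsCartanSubspace {k : Type*} [Field k] {N : Type*} [Fintype N] [DecidableEq N]
    (g1 : Set (Matrix N N k)) (c : Submodule k (Matrix N N k)) : Prop :=
  (c : Set (Matrix N N k)) ⊆ g1 ∧
  (∀ x ∈ c, ∀ y ∈ c, x * y = y * x) ∧
  (∀ x ∈ c, IsSemisimpleMat x) ∧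
  ∀ c' : Submodule k (Matrix N N k),
    ((c' : Set (Matrix N N k)) ⊆ g1 ∧ (∀ x ∈ c', ∀ y ∈ c', x * y = y * x) ∧
      (∀ x ∈ c', IsSemisimpleMat x)) → c ≤ c' → c' = c

/-- The little Weyl group of `c` with respect to `H`, written with respect to
the family `b` (a basis of `c`): the set of matrices of the transformations
`x ↦ h·x·h⁻¹` of `c`, for `h ∈ H` normalizing `c`. -/
def littleWeylSet {k : Type*} [Field k] {N : Type*} [Fintype N] [DecidableEq N] {r : ℕ}
    (H : Set (Matrix N N k)) (c : Submodule k (Matrix N N k))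
    (b : Fin r → Matrix N N k) : Set (Matrix (Fin r) (Fin r) k) :=
  {w | ∃ h ∈ H, (∀ x ∈ c, h * x * h⁻¹ ∈ c) ∧ (∀ x ∈ c, h⁻¹ * x * h ∈ c) ∧
    ∀ j, h * b j * h⁻¹ = ∑ i, w i j • b i}

/-- The `N×N` matrix with `1` on the antidiagonal and `0` elsewhere. -/
def antidiagJ (k : Type*) [Field k] (N : ℕ) : Matrix (Fin N) (Fin N) k :=
  Matrix.of fun i j => if (i : ℕ) + (j : ℕ) = N - 1 then 1 else 0

/-!
The weight projections of `c` are permuted by `θ = Int u⁻¹`, and the non-zero weights form free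
`μ_m`-orbits. For a weight projection `e` the adjoint is `θ ^ (m / 2) e`, so the Lagrange resolvent
`∑ ζ ^ j θ ^ j e` lies in `𝔤(1)`, hence in `c` by maximality; orbit representatives therefore give
a basis of `c`, and the little Weyl group consists of monomial matrices over `μ_m`. By maximality
again, a matrix `X * Y` with `Y * X = 1` on which the adjoint and `θ ^ (m / 2)` agree exhausts a
projection `e` as soon as it lies under it, so `e` has rank `1` if `u ^ m = 1` and rank `2` if
`u ^ m = -1`, by the symmetry type of the Gram matrix `J * u ^ (-m / 2)`. The same factorizations
produce matrix units permuting the basis with determinant `1`, while `u` on a single orbit of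
projections and `1` elsewhere multiplies one basis vector by `ζ`.

If `u ^ m = -1`, then `u ^ (m / 2)` is a complex structure whose eigenspaces are Lagrangian, so
every isometry commuting with it has determinant `1` and the group is all of `G(m,1,r)`. If
`u ^ m = 1`, then `u` on a single orbit is an `m`-cycle of determinant `-1`, so a monomial matrix
lifts with determinant the `m / 2`-th power of the product of its entries: only `G(m,2,r)` is left,
unless an isometry of determinant `-1` centralizes `c` and corrects the sign.
-/

section LagrangeResolvent

variable {k A : Type*} [CommRing k] [Ring A] [Algebra k A]
  {θ : A ≃ₐ[k] A} {m : ℕ} {s t : k} {p q p' q' : A}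

/-- The Lagrange resolvent `∑ j < m, t ^ j • θ ^ j` of an automorphism `θ`, which for
`θ ^ m = 1 = t ^ m` maps onto the `t⁻¹`-eigenspace of `θ`. -/
def lagrangeResolvent (θ : A ≃ₐ[k] A) (m : ℕ) (t : k) : A →ₗ[k] A :=
  ∑ j ∈ Finset.range m, t ^ j • (θ ^ j).toLinearMap

theorem lagrangeResolvent_apply (x : A) :
    lagrangeResolvent θ m t x = ∑ j ∈ Finset.range m, t ^ j • (θ ^ j) x := by
  simp [lagrangeResolvent, LinearMap.sum_apply]

theorem pow_smul_pow_lagrangeResolvent (hθ : θ ^ m = 1) (ht : t ^ m = 1) (j : ℕ) (x : A) :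
    t ^ j • (θ ^ j) (lagrangeResolvent θ m t x) = lagrangeResolvent θ m t x := by
  induction j with
  | zero => simp
  | succ j ih =>
    rw [pow_succ, pow_succ, mul_smul, AlgEquiv.mul_apply, ← map_smul]
    suffices h : t • θ (lagrangeResolvent θ m t x) = lagrangeResolvent θ m t x by rw [h, ih]
    have hshift : t • θ (lagrangeResolvent θ m t x) =
        ∑ j ∈ Finset.range m, t ^ (j + 1) • (θ ^ (j + 1)) x := by
      simp only [lagrangeResolvent_apply, map_sum, Finset.smul_sum, map_smul, smul_smul,
        pow_succ' θ, AlgEquiv.mul_apply, pow_succ']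
    have hsum : _ = _ := (Finset.sum_range_succ (fun j : ℕ => t ^ j • (θ ^ j) x) m).symm.trans
      (Finset.sum_range_succ' _ m)
    rw [hθ, ht, pow_zero, pow_zero] at hsum
    rw [hshift, lagrangeResolvent_apply, ← add_right_cancel hsum]

theorem pow_lagrangeResolvent (j : ℕ) (x : A) :
    (θ ^ j) (lagrangeResolvent θ m t x) = lagrangeResolvent θ m t ((θ ^ j) x) := by
  simp only [lagrangeResolvent_apply, map_sum, map_smul, ← AlgEquiv.mul_apply, ← pow_add,
    add_comm]

theorem pow_apply_lagrangeResolvent_one (hθ : θ ^ m = 1) (j : ℕ) (x : A) :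
    (θ ^ j) (lagrangeResolvent θ m (1 : k) x) = lagrangeResolvent θ m (1 : k) x := by
  simpa only [one_pow, one_smul] using pow_smul_pow_lagrangeResolvent hθ (one_pow m) j x

theorem apply_lagrangeResolvent_one (hθ : θ ^ m = 1) (x : A) :
    θ (lagrangeResolvent θ m (1 : k) x) = lagrangeResolvent θ m (1 : k) x :=
  pow_apply_lagrangeResolvent_one hθ 1 x

/-- `q` is killed by `p` after translation by any non-trivial power of `θ`. -/
def OrthTranslates (θ : A ≃ₐ[k] A) (m : ℕ) (p q : A) : Prop :=
  ∀ j, 0 < j → j < m → p * (θ ^ j) q = 0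

namespace OrthTranslates

theorem symm (hθ : θ ^ m = 1) (h : OrthTranslates θ m p q) {j : ℕ} (hj : 0 < j) (hjm : j < m) :
    (θ ^ j) p * q = 0 := by
  rw [← map_zero (θ ^ j), ← h (m - j) (by omega) (by omega), map_mul, ← AlgEquiv.mul_apply,
    ← pow_add, Nat.add_sub_cancel' hjm.le, hθ, AlgEquiv.one_apply]

theorem of_mul_eq (h : OrthTranslates θ m p q) (hp : p' * p = p') (hq : q * q' = q') :
    OrthTranslates θ m p' q' := fun j hj hjm => by
  rw [← hp, ← hq, map_mul, mul_assoc, ← mul_assoc p, h j hj hjm, zero_mul, mul_zero]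

theorem mul_lagrangeResolvent [NeZero m] (h : OrthTranslates θ m p q) :
    p * lagrangeResolvent θ m t q = p * q := by
  rw [lagrangeResolvent_apply, Finset.mul_sum,
    Finset.sum_eq_single_of_mem 0 (Finset.mem_range.2 (Nat.pos_of_neZero m))]
  · simp
  · intro j hj hj0
    rw [mul_smul_comm, h j (by omega) (Finset.mem_range.1 hj), smul_zero]

theorem lagrangeResolvent_mul [NeZero m] (hθ : θ ^ m = 1) (h : OrthTranslates θ m p q) :
    lagrangeResolvent θ m t p * q = p * q := by
  rw [lagrangeResolvent_apply, Finset.sum_mul,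
    Finset.sum_eq_single_of_mem 0 (Finset.mem_range.2 (Nat.pos_of_neZero m))]
  · simp
  · intro j hj hj0
    rw [smul_mul_assoc, h.symm hθ (by omega) (Finset.mem_range.1 hj), smul_zero]

theorem lagrangeResolvent_mul_lagrangeResolvent [NeZero m] (hθ : θ ^ m = 1) (ht : t ^ m = 1)
    (h : OrthTranslates θ m p q) :
    lagrangeResolvent θ m s p * lagrangeResolvent θ m t q =
      lagrangeResolvent θ m (s * t) (p * q) := by
  rw [lagrangeResolvent_apply p, Finset.sum_mul, lagrangeResolvent_apply (p * q)]
  refine Finset.sum_congr rfl fun j _ => ?_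
  rw [← pow_smul_pow_lagrangeResolvent hθ ht j q, smul_mul_smul_comm, ← mul_pow, ← map_mul,
    h.mul_lagrangeResolvent]

theorem lagrangeResolvent_pow_succ [NeZero m] (hθ : θ ^ m = 1) (ht : t ^ m = 1)
    (h : OrthTranslates θ m p p) (hp : IsIdempotentElem p) (n : ℕ) :
    lagrangeResolvent θ m t p ^ (n + 1) = lagrangeResolvent θ m (t ^ (n + 1)) p := by
  induction n with
  | zero => simp
  | succ n ih =>
    rw [pow_succ, ih, h.lagrangeResolvent_mul_lagrangeResolvent hθ ht, hp.eq, ← pow_succ]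

end OrthTranslates

end LagrangeResolvent

section GradedInvolution

variable {k A : Type*} [CommRing k] [Ring A] [Algebra k A]

/-- `τ` is an involutive anti-automorphism of `A` commuting with the automorphism `θ`, whose
`m`-th power is trivial: the setting in which the `-1`-eigenspace of `τ` is a `ℤ/m`-graded Lie
algebra. -/
structure IsGradedInvolution (θ : A ≃ₐ[k] A) (τ : A →ₗ[k] A) (m : ℕ) : Prop where
  pow_eq_one : θ ^ m = 1
  map_mul : ∀ x y, τ (x * y) = τ y * τ x
  involutive : Function.Involutive τ
  comm : ∀ x, τ (θ x) = θ (τ x)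

/-- The piece `𝔤(1)` of the grading: the skew elements on which `θ` acts by `ζ⁻¹`. -/
def skewEigenspace (θ : A ≃ₐ[k] A) (τ : A →ₗ[k] A) (ζ : k) : Submodule k A :=
  LinearMap.eqLocus τ (-LinearMap.id) ⊓ LinearMap.eqLocus (ζ • θ.toLinearMap) LinearMap.id

variable {θ : A ≃ₐ[k] A} {τ : A →ₗ[k] A} {m : ℕ} {ζ t : k} {x p : A}

theorem mem_skewEigenspace : x ∈ skewEigenspace θ τ ζ ↔ τ x = -x ∧ ζ • θ x = x := Iff.rfl

theorem pow_smul_pow_of_mem_skewEigenspace (hx : x ∈ skewEigenspace θ τ ζ) (j : ℕ) :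
    ζ ^ j • (θ ^ j) x = x := by
  induction j with
  | zero => simp
  | succ j ih =>
    rw [pow_succ, pow_succ, mul_smul, AlgEquiv.mul_apply, ← map_smul,
      (mem_skewEigenspace.1 hx).2, ih]

theorem commute_lagrangeResolvent (hx : x ∈ skewEigenspace θ τ ζ) (h : Commute p x) :
    Commute (lagrangeResolvent θ m t p) x := by
  rw [lagrangeResolvent_apply]
  refine Commute.sum_left _ _ _ fun j _ => Commute.smul_left ?_ _
  rw [← pow_smul_pow_of_mem_skewEigenspace hx j]
  exact (h.map (θ ^ j)).smul_right _

theorem IsGradedInvolution.pow_comm (h : IsGradedInvolution θ τ m) (j : ℕ) (x : A) :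
    τ ((θ ^ j) x) = (θ ^ j) (τ x) := by
  induction j with
  | zero => rfl
  | succ j ih => rw [pow_succ', AlgEquiv.mul_apply, h.comm, ih, AlgEquiv.mul_apply]

theorem IsGradedInvolution.map_lagrangeResolvent (h : IsGradedInvolution θ τ m) (x : A) :
    τ (lagrangeResolvent θ m t x) = lagrangeResolvent θ m t (τ x) := by
  simp only [lagrangeResolvent_apply, map_sum, map_smul, h.pow_comm]

theorem pow_div_two_eq_neg_one [IsDomain k] [NeZero m] (hζ : IsPrimitiveRoot ζ m)
    (hm : Even m) : ζ ^ (m / 2) = -1 := by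
  have hm0 := Nat.pos_of_neZero m
  have h2 : m / 2 * 2 = m := Nat.div_mul_cancel hm.two_dvd
  exact (hζ.pow hm0 h2.symm).eq_neg_one_of_two_right

theorem lagrangeResolvent_mem_skewEigenspace [IsDomain k] [NeZero m] (h : IsGradedInvolution θ τ m)
    (hζ : IsPrimitiveRoot ζ m) (hm : Even m) (hp : τ p = (θ ^ (m / 2)) p) :
    lagrangeResolvent θ m ζ p ∈ skewEigenspace θ τ ζ := by
  have hL := pow_smul_pow_lagrangeResolvent (x := p) h.pow_eq_one hζ.pow_eq_one
  refine mem_skewEigenspace.2 ⟨?_, by simpa using hL 1⟩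
  rw [h.map_lagrangeResolvent, hp, ← pow_lagrangeResolvent]
  conv_rhs => rw [← hL (m / 2), pow_div_two_eq_neg_one hζ hm, neg_one_smul, neg_neg]

/-- The form in which the maximality of a Cartan subspace of `𝔤(1)` is used: `c` contains the
elements of `𝔤(1)` that commute with it and are killed by the separable `X ^ (m + 1) - X`. -/
structure IsRootMaximal (θ : A ≃ₐ[k] A) (τ : A →ₗ[k] A) (m : ℕ) (ζ : k) (c : Submodule k A) :
    Prop where
  le : c ≤ skewEigenspace θ τ ζ
  mem : ∀ a ∈ skewEigenspace θ τ ζ, (∀ x ∈ c, Commute a x) → a ^ (m + 1) = a → a ∈ c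

theorem IsRootMaximal.lagrangeResolvent_mem [IsDomain k] [NeZero m] {c : Submodule k A}
    (hc : IsRootMaximal θ τ m ζ c) (h : IsGradedInvolution θ τ m) (hζ : IsPrimitiveRoot ζ m)
    (hm : Even m) (hidem : IsIdempotentElem p) (horth : OrthTranslates θ m p p)
    (hp : τ p = (θ ^ (m / 2)) p) (hcomm : ∀ x ∈ c, Commute p x) :
    lagrangeResolvent θ m ζ p ∈ c := by
  refine hc.mem _ (lagrangeResolvent_mem_skewEigenspace h hζ hm hp)
    (fun x hx => commute_lagrangeResolvent (hc.le hx) (hcomm x hx)) ?_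
  rw [horth.lagrangeResolvent_pow_succ h.pow_eq_one hζ.pow_eq_one hidem, pow_succ,
    hζ.pow_eq_one, one_mul]

end GradedInvolution

section WeightFamily

open Module

variable {k A : Type*} [Field k] [Ring A] [Algebra k A] {c : Submodule k A}
  {W : Finset (Dual k c)} {E : Dual k c → A}

/-- A weight decomposition of `A` under the commuting diagonalizable subspace `c`: `E f` is the
projection onto the common eigenspace of weight `f`, and `W` contains the weights that occur. -/
structure IsWeightFamily (c : Submodule k A) (W : Finset (Dual k c)) (E : Dual k c → A) :
    Prop where
  mul_left : ∀ (x : c) f, x * E f = f x • E f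
  mul_right : ∀ (x : c) f, E f * x = f x • E f
  sum_eq_one : ∑ f ∈ W, E f = 1

namespace IsWeightFamily

theorem mul_eq_zero_of_ne (h : IsWeightFamily c W E) {f g : Dual k c} (hfg : f ≠ g) {y : A}
    (hy : ∀ x : c, x * y = g x • y) : E f * y = 0 := by
  obtain ⟨x, hx⟩ : ∃ x, f x ≠ g x := by
    by_contra! hall
    exact hfg (LinearMap.ext hall)
  have hsub : (f x - g x) • (E f * y) = 0 := by
    rw [sub_smul, sub_eq_zero, ← smul_mul_assoc, ← h.mul_right, mul_assoc, hy, mul_smul_comm]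
  exact (smul_eq_zero.1 hsub).resolve_left (sub_ne_zero.2 hx)

theorem mul_eq_zero_of_ne' (h : IsWeightFamily c W E) {f g : Dual k c} (hfg : f ≠ g) {y : A}
    (hy : ∀ x : c, y * x = g x • y) : y * E f = 0 := by
  obtain ⟨x, hx⟩ : ∃ x, f x ≠ g x := by
    by_contra! hall
    exact hfg (LinearMap.ext hall)
  have hsub : (f x - g x) • (y * E f) = 0 := by
    rw [sub_smul, sub_eq_zero, ← mul_smul_comm, ← h.mul_left, ← mul_assoc, hy, smul_mul_assoc]
  exact (smul_eq_zero.1 hsub).resolve_left (sub_ne_zero.2 hx)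

theorem mul_eq_self (h : IsWeightFamily c W E) {g : Dual k c} {y : A}
    (hy : ∀ x : c, x * y = g x • y) : E g * y = y := by
  have hsum : ∑ f ∈ W, E f * y = y := by rw [← Finset.sum_mul, h.sum_eq_one, one_mul]
  by_cases hg : g ∈ W
  · rwa [Finset.sum_eq_single_of_mem g hg fun f _ hf => h.mul_eq_zero_of_ne hf hy] at hsum
  · have hy0 : y = 0 := hsum.symm.trans <| Finset.sum_eq_zero fun f hf =>
      h.mul_eq_zero_of_ne (ne_of_mem_of_not_mem hf hg) hy
    rw [hy0, mul_zero]

theorem mul_eq_self' (h : IsWeightFamily c W E) {g : Dual k c} {y : A}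
    (hy : ∀ x : c, y * x = g x • y) : y * E g = y := by
  have hsum : ∑ f ∈ W, y * E f = y := by rw [← Finset.mul_sum, h.sum_eq_one, mul_one]
  by_cases hg : g ∈ W
  · rwa [Finset.sum_eq_single_of_mem g hg fun f _ hf => h.mul_eq_zero_of_ne' hf hy] at hsum
  · have hy0 : y = 0 := hsum.symm.trans <| Finset.sum_eq_zero fun f hf =>
      h.mul_eq_zero_of_ne' (ne_of_mem_of_not_mem hf hg) hy
    rw [hy0, zero_mul]

theorem orthogonalIdempotents (h : IsWeightFamily c W E) : OrthogonalIdempotents E where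
  idem f := h.mul_eq_self fun x => h.mul_left x f
  ortho _ _ hfg := h.mul_eq_zero_of_ne hfg fun x => h.mul_left x _

theorem eq_of_mul_eq (h : IsWeightFamily c W E) {f : Dual k c} {e : A}
    (he : ∀ x : c, e * x = f x • e) (habs : e * E f = E f) : e = E f :=
  (h.mul_eq_self' he).symm.trans habs

theorem commute (h : IsWeightFamily c W E) {z : A} (hz : ∀ x ∈ c, Commute z x)
    (f : Dual k c) : Commute z (E f) := by
  have hleft : E f * (z * E f) = z * E f := h.mul_eq_self fun x => by
    rw [← mul_assoc, ← (hz x x.2).eq, mul_assoc, h.mul_left, mul_smul_comm]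
  have hright : E f * z * E f = E f * z := h.mul_eq_self' fun x => by
    rw [mul_assoc, (hz x x.2).eq, ← mul_assoc, h.mul_right, smul_mul_assoc]
  exact hleft.symm.trans ((mul_assoc _ _ _).symm.trans hright)

theorem eq_sum (h : IsWeightFamily c W E) (x : c) : (x : A) = ∑ f ∈ W, f x • E f := by
  simp_rw [← h.mul_left, ← Finset.mul_sum, h.sum_eq_one, mul_one]

variable {θ : A ≃ₐ[k] A} {τ : A →ₗ[k] A} {m : ℕ} {ζ : k}

theorem map_eq_smul (h : IsWeightFamily c W E) (hc : c ≤ skewEigenspace θ τ ζ) (hζ : ζ ≠ 0)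
    (f : Dual k c) : θ (E f) = E (ζ • f) := by
  have hsymm (x : c) : θ.symm x = ζ • (x : A) := by
    rw [AlgEquiv.symm_apply_eq, map_smul, (mem_skewEigenspace.1 (hc x.2)).2]
  refine h.eq_of_mul_eq (fun x => ?_) ?_
  · apply θ.symm.injective
    simp only [map_mul, map_smul, θ.symm_apply_apply, hsymm, mul_smul_comm, h.mul_right,
      LinearMap.smul_apply, smul_smul, smul_eq_mul]
  · apply θ.symm.injective
    rw [map_mul, θ.symm_apply_apply]
    refine h.mul_eq_self fun x => ?_
    apply θ.injective
    apply smul_right_injective A hζ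
    simp only [map_mul, map_smul, θ.apply_symm_apply]
    rw [← smul_mul_assoc, (mem_skewEigenspace.1 (hc x.2)).2, h.mul_left, LinearMap.smul_apply,
      smul_assoc]

theorem pow_map_eq_smul (h : IsWeightFamily c W E) (hc : c ≤ skewEigenspace θ τ ζ)
    (hζ : ζ ≠ 0) (f : Dual k c) (j : ℕ) : (θ ^ j) (E f) = E (ζ ^ j • f) := by
  induction j with
  | zero => simp
  | succ j ih =>
    rw [pow_succ', AlgEquiv.mul_apply, ih, h.map_eq_smul hc hζ, smul_smul, pow_succ']

theorem map_eq_neg (h : IsWeightFamily c W E) (hτ : IsGradedInvolution θ τ m)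
    (hc : c ≤ skewEigenspace θ τ ζ) (f : Dual k c) : τ (E f) = E (-f) := by
  have hskew (x : c) : τ x = -(x : A) := (mem_skewEigenspace.1 (hc x.2)).1
  refine h.eq_of_mul_eq (fun x => ?_) ?_
  · apply hτ.involutive.injective
    rw [hτ.map_mul, hτ.involutive, hskew, map_smul, hτ.involutive, neg_mul, h.mul_left,
      LinearMap.neg_apply, neg_smul]
  · apply hτ.involutive.injective
    rw [hτ.map_mul, hτ.involutive]
    refine h.mul_eq_self' fun x => ?_
    apply hτ.involutive.injective
    rw [hτ.map_mul, hτ.involutive, hskew, map_smul, hτ.involutive, neg_mul, h.mul_left,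
      LinearMap.neg_apply, neg_smul, neg_neg]

end IsWeightFamily

end WeightFamily

section Frame

variable {k A ι : Type*} [Field k] [Ring A] [Algebra k A] {θ : A ≃ₐ[k] A} {τ : A →ₗ[k] A}
  {m : ℕ} {ζ : k} {c : Submodule k A} {e : ι → A}

/-- A frame of `c ≤ 𝔤(1)`: orthogonal idempotents `e i` with orthogonal `θ`-translates whose
resolvents `∑ j < m, ζ ^ j • (θ ^ j) (e i)` span `c`. The `e i` are the weight projections for
representatives of the `μ_m`-orbits of non-zero weights of `c`. -/
structure IsFrame (θ : A ≃ₐ[k] A) (τ : A →ₗ[k] A) (m : ℕ) (ζ : k) (c : Submodule k A)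
    (e : ι → A) : Prop where
  orthogonal : OrthogonalIdempotents e
  orthTranslates : ∀ i l, OrthTranslates θ m (e i) (e l)
  ne_zero : ∀ i, e i ≠ 0
  map_eq : ∀ i, τ (e i) = (θ ^ (m / 2)) (e i)
  span_eq : Submodule.span k (Set.range fun i => lagrangeResolvent θ m ζ (e i)) = c
  commute : ∀ z, (∀ x ∈ c, Commute z x) → ∀ i, Commute z (e i)

namespace IsFrame

theorem lagrangeResolvent_mem (h : IsFrame θ τ m ζ c e) (i : ι) :
    lagrangeResolvent θ m ζ (e i) ∈ c :=
  h.span_eq ▸ Submodule.subset_span (Set.mem_range_self i)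

variable [NeZero m]

theorem mul_lagrangeResolvent [DecidableEq ι] (h : IsFrame θ τ m ζ c e) (i l : ι) :
    e i * lagrangeResolvent θ m ζ (e l) = if i = l then e i else 0 := by
  rw [(h.orthTranslates i l).mul_lagrangeResolvent, h.orthogonal.mul_eq]

theorem lagrangeResolvent_mul [DecidableEq ι] (h : IsFrame θ τ m ζ c e) (hθ : θ ^ m = 1)
    (i l : ι) : lagrangeResolvent θ m ζ (e l) * e i = if i = l then e i else 0 := by
  rw [(h.orthTranslates l i).lagrangeResolvent_mul hθ, h.orthogonal.mul_eq]
  aesop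

theorem linearIndependent (h : IsFrame θ τ m ζ c e) :
    LinearIndependent k fun i => lagrangeResolvent θ m ζ (e i) := by
  classical
  refine linearIndependent_iff'.2 fun s a hsum i hi => ?_
  have hmul := congrArg (e i * ·) hsum
  simp only [Finset.mul_sum, mul_smul_comm, h.mul_lagrangeResolvent, smul_ite, smul_zero,
    Finset.sum_ite_eq, hi, if_true, mul_zero] at hmul
  exact (smul_eq_zero.1 hmul).resolve_right (h.ne_zero i)

theorem exists_eq_smul (h : IsFrame θ τ m ζ c e) (hθ : θ ^ m = 1) (i : ι) {x : A} (hx : x ∈ c) :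
    ∃ a : k, e i * x = a • e i ∧ x * e i = a • e i := by
  classical
  rw [← h.span_eq] at hx
  induction hx using Submodule.span_induction with
  | mem x hx =>
    obtain ⟨l, rfl⟩ := hx
    refine ⟨if i = l then 1 else 0, ?_⟩
    simp only [h.mul_lagrangeResolvent, h.lagrangeResolvent_mul hθ, ite_smul, one_smul, zero_smul,
      and_self]
  | zero => exact ⟨0, by simp⟩
  | add x y _ _ hx hy =>
    obtain ⟨a, hax, hxa⟩ := hx
    obtain ⟨b, hby, hyb⟩ := hy
    exact ⟨a + b, by rw [mul_add, hax, hby, add_smul], by rw [add_mul, hxa, hyb, add_smul]⟩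
  | smul t x _ hx =>
    obtain ⟨a, hax, hxa⟩ := hx
    exact ⟨t * a, by rw [mul_smul_comm, hax, mul_smul], by rw [smul_mul_assoc, hxa, mul_smul]⟩

theorem eq_of_mul_eq (h : IsFrame θ τ m ζ c e) (hτ : IsGradedInvolution θ τ m)
    (hc : IsRootMaximal θ τ m ζ c) (hζ : IsPrimitiveRoot ζ m) (hm : Even m) {i : ι} {p : A}
    (hp : IsIdempotentElem p) (hp0 : p ≠ 0) (hleft : e i * p = p) (hright : p * e i = p)
    (hmap : τ p = (θ ^ (m / 2)) p) : p = e i := by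
  have horth : OrthTranslates θ m (e i) p :=
    (h.orthTranslates i i).of_mul_eq (h.orthogonal.idem i) hleft
  have hcomm : ∀ x ∈ c, Commute p x := fun x hx => by
    obtain ⟨a, hax, hxa⟩ := h.exists_eq_smul hτ.pow_eq_one i hx
    calc p * x = a • p := by rw [← hright, mul_assoc, hax, mul_smul_comm]
      _ = x * p := by rw [← hleft, ← mul_assoc, hxa, smul_mul_assoc]
  obtain ⟨a, hax, -⟩ := h.exists_eq_smul hτ.pow_eq_one i <| hc.lagrangeResolvent_mem hτ hζ hm hp
    (horth.of_mul_eq hright hp) hmap hcomm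
  have hpa : p = a • e i := by rw [← hax, horth.mul_lagrangeResolvent, hleft]
  have ha : a = 1 := by
    have hsub : (a - 1) • p = 0 := by
      rw [sub_smul, one_smul, sub_eq_zero]
      nth_rw 2 [← hp.eq, hpa]
      rw [smul_mul_assoc, hleft]
    exact sub_eq_zero.1 ((smul_eq_zero.1 hsub).resolve_right hp0)
  rw [hpa, ha, one_smul]

end IsFrame

theorem IsFrame.comp_equiv {κ : Type*} (h : IsFrame θ τ m ζ c e) (σ : κ ≃ ι) :
    IsFrame θ τ m ζ c (e ∘ σ) where
  orthogonal := h.orthogonal.embedding σ.toEmbedding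
  orthTranslates _ _ := h.orthTranslates _ _
  ne_zero _ := h.ne_zero _
  map_eq _ := h.map_eq _
  span_eq := by
    rw [← h.span_eq]
    exact congrArg (Submodule.span k)
      (σ.surjective.range_comp fun i => lagrangeResolvent θ m ζ (e i))
  commute z hz _ := h.commute z hz _

end Frame

section ExistsFrame

open Module

variable {k A : Type*} [Field k] [Ring A] [Algebra k A] {θ : A ≃ₐ[k] A} {τ : A →ₗ[k] A}
  {m : ℕ} {ζ : k} {c : Submodule k A} {W : Finset (Dual k c)} {E : Dual k c → A}

variable [NeZero m]

theorem exists_subset_primitiveRoot_orbit_representatives {V : Type*} [AddCommGroup V]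
    [Module k V] (hζ : IsPrimitiveRoot ζ m) (S : Set V) :
    ∃ T ⊆ S, (∀ f ∈ T, ∀ g ∈ T, ∀ j : ℕ, ζ ^ j • f = g → f = g) ∧
      ∀ f ∈ S, ∃ g ∈ T, ∃ j : ℕ, f = ζ ^ j • g := by
  let π : V → MulAction.orbitRel.Quotient (rootsOfUnity m k) V := Quotient.mk''
  have hπ (f g : V) : π f = π g ↔ ∃ j : ℕ, ζ ^ j • g = f := by
    refine Quotient.eq''.trans (MulAction.orbitRel_apply.trans ⟨?_, ?_⟩)
    · rintro ⟨w, rfl⟩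
      obtain ⟨j, -, hj⟩ := hζ.eq_pow_of_pow_eq_one ((mem_rootsOfUnity' m w.1).1 w.2)
      exact ⟨j, hj ▸ rfl⟩
    · rintro ⟨j, rfl⟩
      exact ⟨hζ.toRootsOfUnity ^ j, by simp [Subgroup.smul_def, Units.smul_def]⟩
  obtain ⟨T, hTS, hT⟩ := Set.exists_subset_bijOn S π
  refine ⟨T, hTS, fun f hf g hg j hj => hT.injOn hf hg ((hπ g f).2 ⟨j, hj⟩).symm, fun f hf => ?_⟩
  obtain ⟨g, hg, hgf⟩ := hT.surjOn (Set.mem_image_of_mem π hf)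
  obtain ⟨j, hj⟩ := (hπ f g).1 hgf.symm
  exact ⟨g, hg, j, hj.symm⟩

namespace IsWeightFamily

theorem orthTranslates (h : IsWeightFamily c W E) (hc : c ≤ skewEigenspace θ τ ζ)
    (hζ : IsPrimitiveRoot ζ m) {f g : Dual k c} (hf : f ≠ 0)
    (hfg : ∀ j : ℕ, ζ ^ j • f = g → f = g) : OrthTranslates θ m (E g) (E f) := by
  intro j hj hjm
  rw [h.pow_map_eq_smul hc (hζ.ne_zero (NeZero.ne m))]
  refine h.orthogonalIdempotents.ortho fun hgf => ?_
  obtain ⟨x, hx⟩ := DFunLike.ne_iff.1 hf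
  have hfix : ζ ^ j * f x = f x := DFunLike.congr_fun (hgf.symm.trans (hfg j hgf.symm).symm) x
  exact hζ.pow_ne_one_of_pos_of_lt hj.ne' hjm (mul_eq_right₀ hx |>.1 hfix)

theorem map_eq_pow_div_two (h : IsWeightFamily c W E) (hτ : IsGradedInvolution θ τ m)
    (hc : c ≤ skewEigenspace θ τ ζ) (hζ : IsPrimitiveRoot ζ m) (hm : Even m) (f : Dual k c) :
    τ (E f) = (θ ^ (m / 2)) (E f) := by
  rw [h.map_eq_neg hτ hc, h.pow_map_eq_smul hc (hζ.ne_zero (NeZero.ne m)),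
    pow_div_two_eq_neg_one hζ hm]
  congr 1
  ext x
  simp

theorem eq_zero_of_forall (h : IsWeightFamily c W E) {T : Set (Dual k c)}
    (hT : ∀ f, f ≠ 0 → E f ≠ 0 → ∃ g ∈ T, ∃ j : ℕ, f = ζ ^ j • g) {x : c}
    (hx : ∀ g ∈ T, g x = 0) : x = 0 := by
  rw [← Submodule.coe_eq_zero, h.eq_sum x]
  refine Finset.sum_eq_zero fun f _ => ?_
  by_cases hE : E f = 0
  · rw [hE, smul_zero]
  by_cases hf : f = 0
  · rw [hf, LinearMap.zero_apply, zero_smul]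
  obtain ⟨g, hg, j, rfl⟩ := hT f hf hE
  rw [LinearMap.smul_apply, hx g hg, smul_zero, zero_smul]

theorem mem_of_ne_zero (h : IsWeightFamily c W E) {f : Dual k c} (hf : E f ≠ 0) : f ∈ W := by
  contrapose! hf
  rw [← mul_one (E f), ← h.sum_eq_one, Finset.mul_sum]
  exact Finset.sum_eq_zero fun g hg =>
    h.orthogonalIdempotents.ortho (ne_of_mem_of_not_mem hg hf).symm

theorem exists_isFrame (h : IsWeightFamily c W E) (hτ : IsGradedInvolution θ τ m)
    (hc : IsRootMaximal θ τ m ζ c) (hζ : IsPrimitiveRoot ζ m) (hm : Even m) :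
    ∃ e : Fin (finrank k c) → A, IsFrame θ τ m ζ c e := by
  obtain ⟨T, hTS, hT, hrep⟩ :=
    exists_subset_primitiveRoot_orbit_representatives hζ {f : Dual k c | f ≠ 0 ∧ E f ≠ 0}
  have hfin : T.Finite := W.finite_toSet.subset fun f hf => h.mem_of_ne_zero (hTS hf).2
  have := hfin.fintype
  have horth (f g : T) : OrthTranslates θ m (E f) (E g) :=
    h.orthTranslates hc.le hζ (hTS g.2).1 (hT g g.2 f f.2)
  have hmem (f : T) : lagrangeResolvent θ m ζ (E f) ∈ c :=
    hc.lagrangeResolvent_mem hτ hζ hm (h.orthogonalIdempotents.idem f) (horth f f)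
      (h.map_eq_pow_div_two hτ hc.le hζ hm f)
      fun x hx => (h.mul_right ⟨x, hx⟩ f).trans (h.mul_left ⟨x, hx⟩ f).symm
  have hdual (f g : T) : f.1 ⟨_, hmem g⟩ • E f = E f * E g := by
    rw [← h.mul_right, (horth f g).mul_lagrangeResolvent]
  have hbases : DualBases (fun f : T => (⟨_, hmem f⟩ : c)) (fun f : T => f.1) :=
    { eval_same := fun f => smul_left_injective k (hTS f.2).2 <| by
        simpa only [one_smul, (h.orthogonalIdempotents.idem f).eq] using hdual f f
      eval_of_ne := fun f g hfg => smul_left_injective k (hTS f.2).2 <| by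
        simpa only [zero_smul, h.orthogonalIdempotents.ortho (Subtype.coe_ne_coe.2 hfg)]
          using hdual f g
      total := fun {x y} hxy => sub_eq_zero.1 <|
        h.eq_zero_of_forall (fun f hf hE => hrep f ⟨hf, hE⟩) fun g hg => by
          rw [map_sub, sub_eq_zero]
          exact hxy ⟨g, hg⟩ }
  have hframe : IsFrame θ τ m ζ c fun f : T => E f :=
    { orthogonal := h.orthogonalIdempotents.embedding (Function.Embedding.subtype _)
      orthTranslates := horth
      ne_zero := fun f => (hTS f.2).2
      map_eq := fun f => h.map_eq_pow_div_two hτ hc.le hζ hm f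
      span_eq := by
        have hmap := congrArg (Submodule.map c.subtype) hbases.basis.span_eq
        rw [hbases.coe_basis, Submodule.map_span, Submodule.map_subtype_top,
          ← Set.range_comp] at hmap
        exact hmap
      commute := fun z hz f => h.commute hz f }
  exact ⟨_, hframe.comp_equiv
    (Fintype.equivFinOfCardEq (finrank_eq_card_basis hbases.basis).symm).symm⟩

end IsWeightFamily

end ExistsFrame

section InnerAut

variable {k A : Type*} [CommSemiring k] [Semiring A] [Algebra k A]

/-- Conjugation `x ↦ h * x * h⁻¹` by a unit, as an algebra automorphism. -/
def innerAut (k : Type*) {A : Type*} [CommSemiring k] [Semiring A] [Algebra k A] :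
    Aˣ →* (A ≃ₐ[k] A) :=
  (MulSemiringAction.toAlgAut (ConjAct Aˣ) k A).comp ConjAct.toConjAct.toMonoidHom

theorem innerAut_apply (h : Aˣ) (x : A) : innerAut k h x = h * x * (h⁻¹ : Aˣ) := rfl

theorem innerAut_eq_iff {h : Aˣ} {x y : A} : innerAut k h x = y ↔ h * x = y * h := by
  rw [innerAut_apply, Units.mul_inv_eq_iff_eq_mul]

end InnerAut

section Diagonalization

open Module

variable {k : Type*} [Field k] {N : Type*}

theorem exists_isWeightFamily_of_le_range [Finite N] {A : Type*} [Ring A] [Algebra k A]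
    (φ : (N → k) →ₐ[k] A) {c : Submodule k A} (hc : c ≤ LinearMap.range φ.toLinearMap) :
    ∃ W E, IsWeightFamily c W E := by
  classical
  have := Fintype.ofFinite N
  obtain ⟨ψ, hψ⟩ := φ.toLinearMap.rangeRestrict.exists_rightInverse_of_surjective
    φ.toLinearMap.range_rangeRestrict
  let wt (i : N) : Dual k c := LinearMap.proj i ∘ₗ ψ ∘ₗ Submodule.inclusion hc
  have hwt (x : c) : φ (fun i => wt i x) = x :=
    congrArg Subtype.val (LinearMap.congr_fun hψ (Submodule.inclusion hc x))
  let E (f : Dual k c) : A := φ fun i => if wt i = f then 1 else 0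
  have hleft (x : c) (f : Dual k c) : x * E f = f x • E f := by
    rw [← hwt x, ← map_mul, ← map_smul]
    congr 1
    ext i
    by_cases hi : wt i = f <;> simp [hi]
  refine ⟨Finset.univ.image wt, E, hleft, fun x f => ?_, ?_⟩
  · rw [← hleft, ← hwt x, ← map_mul, ← map_mul, mul_comm]
  · rw [← map_sum, ← map_one φ]
    congr 1
    ext i
    simp [Finset.sum_apply]

variable [Fintype N] [DecidableEq N]

/-- The diagonal matrices conjugated by `P`, as a copy of the algebra `N → k`. -/
def conjDiagonal (P : (Matrix N N k)ˣ) : (N → k) →ₐ[k] Matrix N N k :=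
  (innerAut k P).toAlgHom.comp (diagonalAlgHom k)

theorem conjDiagonal_apply (P : (Matrix N N k)ˣ) (v : N → k) :
    conjDiagonal P v = innerAut k P (diagonal v) := rfl

theorem isSemisimpleMat_iff_exists_mem_range {x : Matrix N N k} :
    IsSemisimpleMat x ↔ ∃ P, x ∈ Set.range (conjDiagonal P) := by
  constructor
  · rintro ⟨P, hP, hdiag⟩
    obtain ⟨Q, rfl⟩ := (isUnit_iff_isUnit_det P).2 hP
    refine ⟨Q⁻¹, diag (Q * x * (Q : Matrix N N k)⁻¹), ?_⟩
    rw [conjDiagonal_apply, hdiag.diagonal_diag, innerAut_eq_iff,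
      coe_units_inv, Matrix.mul_assoc, nonsing_inv_mul_cancel_left _ _ hP]
  · rintro ⟨P, v, rfl⟩
    refine ⟨(P⁻¹ : (Matrix N N k)ˣ), (isUnit_iff_isUnit_det _).1 (P⁻¹).isUnit, ?_⟩
    rw [← coe_units_inv, inv_inv, conjDiagonal_apply, innerAut_apply,
      Matrix.mul_assoc, Matrix.mul_assoc, Units.inv_mul, Matrix.mul_one, Units.inv_mul_cancel_left]
    exact isDiag_diagonal v

theorem isSemisimple_of_mem_range_conjDiagonal {P : (Matrix N N k)ˣ} {x : Matrix N N k}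
    (hx : x ∈ Set.range (conjDiagonal P)) :
    Module.End.IsSemisimple (toLin' x) := by
  classical
  obtain ⟨v, rfl⟩ := hx
  let p : Polynomial k := ∏ a ∈ Finset.univ.image v, (Polynomial.X - Polynomial.C a)
  have hp : Squarefree p :=
    (Polynomial.separable_prod_X_sub_C_iff'.2 fun _ _ _ _ h => h).squarefree
  have hpv : Polynomial.aeval v p = 0 := by
    ext i
    rw [Polynomial.aeval_pi_apply₂, map_prod, Pi.zero_apply]
    exact Finset.prod_eq_zero (Finset.mem_image_of_mem v (Finset.mem_univ i)) (by simp)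
  refine Module.End.isSemisimple_of_squarefree_aeval_eq_zero hp ?_
  have hmap := Polynomial.aeval_algHom_apply
    ((toLinAlgEquiv' (n := N) (R := k)).toAlgHom.comp (conjDiagonal P)) v p
  rw [hpv, map_zero] at hmap
  exact hmap

theorem exists_subset_range_conjDiagonal [IsAlgClosed k] (s : Set (Matrix N N k))
    (hcomm : ∀ x ∈ s, ∀ y ∈ s, Commute x y)
    (hss : ∀ x ∈ s, Module.End.IsSemisimple (toLin' x)) :
    ∃ P, s ⊆ Set.range (conjDiagonal P) := by
  let eigen : Set (N → k) := {v | ∀ x ∈ s, ∃ a : k, x *ᵥ v = a • v}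
  have hspan : ⊤ ≤ Submodule.span k eigen := by
    rw [← Module.End.iSup_iInf_maxGenEigenspace_eq_top_of_iSup_maxGenEigenspace_eq_top_of_commute
      (fun x : s => toLin' x.1)
      (fun x y _ => (hcomm x x.2 y y.2).map (toLinAlgEquiv' (n := N) (R := k)))
      fun x => Module.End.iSup_maxGenEigenspace_eq_top _]
    refine iSup_le fun χ v hv => Submodule.subset_span fun x hx => ⟨χ ⟨x, hx⟩, ?_⟩
    have hvx := (Submodule.mem_iInf _).1 hv ⟨x, hx⟩
    rw [(hss x hx).isFinitelySemisimple.maxGenEigenspace_eq_eigenspace] at hvx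
    exact Module.End.mem_eigenspace_iff.1 hvx
  let B := (Basis.ofSpan hspan).reindex ((Basis.ofSpan hspan).indexEquiv (Pi.basisFun k N))
  have hB (i : N) : B i ∈ eigen := Basis.ofSpan_subset hspan (by simp [B])
  have := (Pi.basisFun k N).invertibleToMatrix B
  obtain ⟨P, hP⟩ := isUnit_of_invertible ((Pi.basisFun k N).toMatrix B)
  refine ⟨P, fun x hx => ?_⟩
  choose a ha using fun i => hB i x hx
  refine ⟨a, ?_⟩
  rw [conjDiagonal_apply, innerAut_eq_iff, hP]
  ext i j
  have hij : ∑ l, x i l * B j l = a j * B j i := congrFun (ha j) i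
  rw [mul_diagonal, Matrix.mul_apply]
  simp only [Basis.toMatrix_apply, Pi.basisFun_repr]
  rw [hij, mul_comm]

theorem isSemisimple_of_pow_succ_eq_self {m : ℕ} [NeZero (m : k)]
    {x : Matrix N N k} (hx : x ^ (m + 1) = x) : Module.End.IsSemisimple (toLin' x) := by
  have hm0 : m ≠ 0 := fun h => NeZero.ne (m : k) (by rw [h, Nat.cast_zero])
  have hcoprime : IsCoprime (Polynomial.X : Polynomial k) (Polynomial.X ^ m - Polynomial.C 1) :=
    ⟨Polynomial.X ^ (m - 1), -1, by
      rw [← pow_succ, Nat.sub_add_cancel (Nat.one_le_iff_ne_zero.2 hm0)]; simp⟩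
  refine Module.End.isSemisimple_of_squarefree_aeval_eq_zero
    (Polynomial.separable_X.mul (Polynomial.separable_X_pow_sub_C 1 (NeZero.ne _) one_ne_zero)
      hcoprime).squarefree ?_
  simp only [map_mul, Polynomial.aeval_X, map_sub, map_pow, map_one]
  rw [mul_sub, mul_one, ← pow_succ', ← toLin'_pow, hx, sub_self]

theorem IsCartanSubspace.mem_of_pow_succ_eq_self [IsAlgClosed k] {V c : Submodule k (Matrix N N k)}
    (hc : IsCartanSubspace (V : Set (Matrix N N k)) c) {m : ℕ} [NeZero (m : k)]
    {a : Matrix N N k} (ha : a ∈ V) (hcomm : ∀ x ∈ c, Commute a x) (hpow : a ^ (m + 1) = a) :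
    a ∈ c := by
  obtain ⟨hcV, hcc, hcs, hmax⟩ := hc
  obtain ⟨P, hP⟩ := exists_subset_range_conjDiagonal (insert a (c : Set (Matrix N N k)))
    (by
      rintro x (rfl | hx) y (rfl | hy)
      · rfl
      · exact hcomm y hy
      · exact (hcomm x hx).symm
      · exact hcc x hx y hy)
    (by
      rintro x (rfl | hx)
      · exact isSemisimple_of_pow_succ_eq_self hpow
      · obtain ⟨Q, hQ⟩ := isSemisimpleMat_iff_exists_mem_range.1 (hcs x hx)
        exact isSemisimple_of_mem_range_conjDiagonal hQ)
  have hle : c ⊔ Submodule.span k {a} ≤ LinearMap.range (conjDiagonal P).toLinearMap :=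
    sup_le (fun x hx => hP (Or.inr hx))
      ((Submodule.span_singleton_le_iff_mem _ _).2 (hP (Or.inl rfl)))
  have heq := hmax (c ⊔ Submodule.span k {a})
    ⟨SetLike.coe_subset_coe.2 (sup_le hcV ((Submodule.span_singleton_le_iff_mem _ _).2 ha)),
      fun x hx y hy => ?_,
      fun x hx => isSemisimpleMat_iff_exists_mem_range.2 ⟨P, hle hx⟩⟩ le_sup_left
  · rw [← heq]
    exact Submodule.mem_sup_right (Submodule.mem_span_singleton_self a)
  · obtain ⟨v, rfl⟩ := hle hx
    obtain ⟨w, rfl⟩ := hle hy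
    simp only [AlgHom.toLinearMap_apply, ← map_mul, mul_comm]

theorem IsCartanSubspace.exists_isWeightFamily [IsAlgClosed k] {V : Set (Matrix N N k)}
    {c : Submodule k (Matrix N N k)} (hc : IsCartanSubspace V c) :
    ∃ W E, IsWeightFamily c W E := by
  obtain ⟨P, hP⟩ := exists_subset_range_conjDiagonal (c : Set (Matrix N N k)) hc.2.1 fun x hx => by
    obtain ⟨Q, hQ⟩ := isSemisimpleMat_iff_exists_mem_range.1 (hc.2.2.1 x hx)
    exact isSemisimple_of_mem_range_conjDiagonal hQ
  exact exists_isWeightFamily_of_le_range (conjDiagonal P) hP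

end Diagonalization

section FormAdjoint

variable {k N : Type*} [Field k] [Fintype N] [DecidableEq N] {J : Matrix N N k}

/-- The adjoint `J⁻¹ * xᵀ * J` of `x` with respect to the bilinear form with Gram matrix `J`. -/
noncomputable def formAdjoint (J : Matrix N N k) : Matrix N N k →ₗ[k] Matrix N N k :=
  LinearMap.mulLeftRight k (J⁻¹, J) ∘ₗ (transposeLinearEquiv N N k k).toLinearMap

theorem formAdjoint_apply (x : Matrix N N k) : formAdjoint J x = J⁻¹ * xᵀ * J := rfl

theorem formAdjoint_eq_iff (hJ : IsUnit J.det) {x y : Matrix N N k} :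
    formAdjoint J x = y ↔ xᵀ * J = J * y := by
  rw [formAdjoint_apply, Matrix.mul_assoc]
  constructor
  · rintro rfl
    rw [mul_nonsing_inv_cancel_left _ _ hJ]
  · intro h
    rw [h, nonsing_inv_mul_cancel_left _ _ hJ]

theorem formAdjoint_mul (hJ : IsUnit J.det) (x y : Matrix N N k) :
    formAdjoint J (x * y) = formAdjoint J y * formAdjoint J x := by
  rw [formAdjoint_eq_iff hJ, transpose_mul, Matrix.mul_assoc, (formAdjoint_eq_iff hJ).1 rfl,
    ← Matrix.mul_assoc, (formAdjoint_eq_iff hJ).1 rfl, Matrix.mul_assoc]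

theorem formAdjoint_involutive (hJ : IsUnit J.det) (hsymm : Jᵀ = J) :
    Function.Involutive (formAdjoint J) := fun x => by
  rw [formAdjoint_eq_iff hJ, ← transpose_inj, transpose_mul, transpose_transpose, transpose_mul,
    hsymm]
  exact ((formAdjoint_eq_iff hJ).1 rfl).symm

theorem det_formAdjoint (hJ : IsUnit J.det) (x : Matrix N N k) :
    (formAdjoint J x).det = x.det := by
  rw [formAdjoint_apply, det_mul, det_mul, det_transpose, mul_right_comm, ← det_mul,
    nonsing_inv_mul _ hJ, det_one, one_mul]

theorem formAdjoint_mul_self_eq_one_iff (hJ : IsUnit J.det) {x : Matrix N N k} :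
    formAdjoint J x * x = 1 ↔ xᵀ * J * x = J := by
  have hmul : J * (formAdjoint J x * x) = xᵀ * J * x := by
    rw [← Matrix.mul_assoc, (formAdjoint_eq_iff hJ).1 rfl]
  rw [← hmul]
  refine ⟨fun h => by rw [h, Matrix.mul_one], fun h => ?_⟩
  rw [← nonsing_inv_mul_cancel_left _ (formAdjoint J x * x) hJ, h, nonsing_inv_mul _ hJ]

theorem formAdjoint_eq_neg_iff (hJ : IsUnit J.det) {x : Matrix N N k} :
    formAdjoint J x = -x ↔ xᵀ * J + J * x = 0 := by
  rw [formAdjoint_eq_iff hJ, Matrix.mul_neg, eq_neg_iff_add_eq_zero]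

theorem formAdjoint_eq_innerAut_iff (hJ : IsUnit J.det) {V : (Matrix N N k)ˣ} {x y : Matrix N N k} :
    formAdjoint J x = innerAut k V y ↔ xᵀ * (J * V) = J * V * y := by
  rw [eq_comm, innerAut_eq_iff, eq_comm, ← Matrix.mul_assoc xᵀ, (formAdjoint_eq_iff hJ).1 rfl,
    Matrix.mul_assoc, Matrix.mul_assoc]
  exact (isUnit_iff_isUnit_det J).2 hJ |>.mul_right_inj.symm

variable {m : ℕ} {u : (Matrix N N k)ˣ}

theorem isGradedInvolution_formAdjoint (hJ : IsUnit J.det) (hsymm : Jᵀ = J)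
    (hu : (u : Matrix N N k)ᵀ * J * u = J)
    (hum : (u : Matrix N N k) ^ m = 1 ∨ (u : Matrix N N k) ^ m = -1) :
    IsGradedInvolution (innerAut k u⁻¹) (formAdjoint J) m where
  pow_eq_one := by
    rw [← map_pow, inv_pow, map_inv, inv_eq_one]
    ext1 x
    rw [AlgEquiv.one_apply, innerAut_eq_iff, Units.val_pow_eq_pow_val]
    obtain h | h := hum <;> simp [h]
  map_mul := formAdjoint_mul hJ
  involutive := formAdjoint_involutive hJ hsymm
  comm x := by
    have hadj : formAdjoint J u = (u⁻¹ : (Matrix N N k)ˣ) :=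
      Units.eq_inv_of_mul_eq_one_right ((formAdjoint_mul_self_eq_one_iff hJ).2 hu)
    symm
    rw [innerAut_eq_iff, ← hadj, ← formAdjoint_mul hJ, ← formAdjoint_mul hJ, innerAut_apply,
      inv_inv, Matrix.mul_assoc, Units.mul_inv_cancel_left]

theorem setOf_skew_eq_skewEigenspace (hJ : IsUnit J.det) {ζ : k} :
    {x : Matrix N N k | xᵀ * J + J * x = 0 ∧
      (u : Matrix N N k) * x * (u : Matrix N N k)⁻¹ = ζ • x} =
      (skewEigenspace (innerAut k u⁻¹) (formAdjoint J) ζ : Set (Matrix N N k)) := by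
  ext x
  rw [SetLike.mem_coe, mem_skewEigenspace, Set.mem_ofPred_eq, formAdjoint_eq_neg_iff hJ,
    ← coe_units_inv, ← innerAut_apply (k := k), map_inv, ← map_smul, AlgEquiv.aut_inv,
    AlgEquiv.symm_apply_eq, eq_comm (a := ζ • x)]

end FormAdjoint

section Isometries

variable {k A : Type*} [CommRing k] [Ring A] [Algebra k A]
  {θ : A ≃ₐ[k] A} {τ : A →ₗ[k] A} {m : ℕ} {χ : A →* k} {p y z : A} {g h : Aˣ}

theorem OrthTranslates.one_sub_mul_one_sub [NeZero m] (hθ : θ ^ m = 1)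
    (h : OrthTranslates θ m y z) :
    (1 - lagrangeResolvent θ m 1 y) * (1 - lagrangeResolvent θ m 1 z) =
      1 - lagrangeResolvent θ m 1 (y + z - y * z) := by
  rw [sub_mul, one_mul, mul_sub, mul_one,
    h.lagrangeResolvent_mul_lagrangeResolvent hθ (one_pow m), mul_one, map_sub, map_add]
  abel

theorem OrthTranslates.map_one_sub_lagrangeResolvent (h : OrthTranslates θ m y y)
    (hχ : ∀ x, χ (θ x) = χ x) : χ (1 - lagrangeResolvent θ m 1 y) = χ (1 - y) ^ m := by
  have hχpow (j : ℕ) (x : A) : χ ((θ ^ j) x) = χ x := by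
    induction j with
    | zero => rfl
    | succ j ih => rw [pow_succ', AlgEquiv.mul_apply, hχ, ih]
  suffices hn : ∀ n ≤ m, χ (1 - ∑ j ∈ Finset.range n, (θ ^ j) y) = χ (1 - y) ^ n by
    simpa only [lagrangeResolvent_apply, one_pow, one_smul] using hn m le_rfl
  intro n hn
  induction n with
  | zero => simp
  | succ n ih =>
    have hzero : (∑ j ∈ Finset.range n, (θ ^ j) y) * (θ ^ n) y = 0 := by
      rw [Finset.sum_mul]
      refine Finset.sum_eq_zero fun j hj => ?_
      have hjn := Finset.mem_range.1 hj
      rw [← Nat.add_sub_cancel' hjn.le, pow_add, AlgEquiv.mul_apply, ← map_mul,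
        h _ (by omega) (by omega), map_zero]
    have hmul : 1 - ∑ j ∈ Finset.range (n + 1), (θ ^ j) y =
        (1 - ∑ j ∈ Finset.range n, (θ ^ j) y) * (θ ^ n) (1 - y) := by
      rw [Finset.sum_range_succ, map_sub, map_one, mul_sub, mul_one, sub_mul, one_mul, hzero]
      abel
    rw [hmul, map_mul, ih (by omega), hχpow, pow_succ]

theorem OrthTranslates.map_one_sub_lagrangeResolvent_eq_one (h : OrthTranslates θ m y y)
    (hχ : ∀ x, χ (θ x) = χ x) (hm : Even m) (hy : (1 - y) * (1 - y) = 1) :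
    χ (1 - lagrangeResolvent θ m 1 y) = 1 := by
  obtain ⟨a, rfl⟩ := hm
  rw [h.map_one_sub_lagrangeResolvent hχ, ← two_mul, pow_mul, pow_two, ← map_mul, hy, map_one,
    one_pow]

namespace IsGradedInvolution

theorem map_one (hτ : IsGradedInvolution θ τ m) : τ 1 = 1 := by
  rw [← mul_one (τ 1), ← hτ.involutive 1, ← hτ.map_mul, hτ.involutive, mul_one, hτ.involutive]

/-- The group of units that are fixed by `θ` and isometric for `τ`; for an orthogonal group `G`
with an automorphism `θ` this is the fixed point group `G(0)`. -/
def isometryGroup (hτ : IsGradedInvolution θ τ m) : Subgroup Aˣ where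
  carrier := {g | θ g = g ∧ τ g = (g⁻¹ : Aˣ)}
  one_mem' := ⟨_root_.map_one θ, by rw [Units.val_one, hτ.map_one, inv_one, Units.val_one]⟩
  mul_mem' {g h} hg hh := ⟨by rw [Units.val_mul, _root_.map_mul, hg.1, hh.1],
    by rw [Units.val_mul, hτ.map_mul, hg.2, hh.2, _root_.mul_inv_rev, Units.val_mul]⟩
  inv_mem' {g} hg := ⟨by
    rw [← Units.mul_right_inj g]
    nth_rw 1 [← hg.1]
    rw [← _root_.map_mul, Units.mul_inv, _root_.map_one], by rw [← hg.2, hτ.involutive, inv_inv]⟩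

theorem map_mul_self_eq_one (hτ : IsGradedInvolution θ τ m) (hχ : ∀ x, χ (τ x) = χ x)
    (hg : g ∈ hτ.isometryGroup) : χ g * χ g = 1 := by
  nth_rw 1 [← hχ]
  rw [hg.2, ← _root_.map_mul, Units.inv_mul, _root_.map_one]

end IsGradedInvolution

theorem one_sub_add_mul_mul_one_sub_add_mul (hp : IsIdempotentElem p) {a b : A}
    (hb : Commute b p) : (1 - p + a * p) * (1 - p + b * p) = 1 - p + a * b * p := by
  have h1 : (1 - p) * (b * p) = 0 := by rw [hb.eq, ← mul_assoc, sub_mul, hp.eq]; simp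
  have h2 : a * p * (1 - p) = 0 := by rw [mul_assoc, mul_sub, hp.eq]; simp
  have h3 : a * p * (b * p) = a * b * p := by
    rw [mul_assoc, hb.eq, ← mul_assoc p, hp.eq, ← hb.eq, mul_assoc]
  rw [add_mul, mul_add, mul_add, h1, h2, h3, hp.one_sub.eq, add_zero, zero_add]

/-- The unit acting as `h` on the range of the idempotent `p` and trivially on its kernel. -/
def blockUnit (hp : IsIdempotentElem p) (hcomm : Commute (h : A) p) : Aˣ where
  val := 1 - p + h * p
  inv := 1 - p + (h⁻¹ : Aˣ) * p
  val_inv := by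
    rw [one_sub_add_mul_mul_one_sub_add_mul hp hcomm.units_inv_left, Units.mul_inv, one_mul,
      sub_add_cancel]
  inv_val := by
    rw [one_sub_add_mul_mul_one_sub_add_mul hp hcomm, Units.inv_mul, one_mul, sub_add_cancel]

theorem coe_blockUnit (hp : IsIdempotentElem p) (hcomm : Commute (h : A) p) :
    (blockUnit hp hcomm : A) = 1 - p + h * p := rfl

theorem coe_inv_blockUnit (hp : IsIdempotentElem p) (hcomm : Commute (h : A) p) :
    ((blockUnit hp hcomm)⁻¹ : Aˣ) = 1 - p + (h⁻¹ : Aˣ) * p := rfl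

theorem blockUnit_mul_blockUnit_one_sub (hp : IsIdempotentElem p) (hcomm : Commute (h : A) p) :
    (blockUnit hp hcomm : A) *
      blockUnit hp.one_sub ((Commute.one_right (h : A)).sub_right hcomm) = h := by
  have hleft : (1 - p + h * p) * p = h * p := by
    rw [add_mul, mul_assoc, sub_mul, hp.eq, one_mul, sub_self, zero_add]
  have hright : (1 - p + h * p) * (1 - p) = 1 - p := by
    rw [mul_sub, hleft, mul_one, add_sub_cancel_right]
  rw [coe_blockUnit, coe_blockUnit, sub_sub_cancel, mul_add, hleft,
    ((Commute.one_right (h : A)).sub_right hcomm).eq, ← mul_assoc, hright,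
    ← ((Commute.one_right (h : A)).sub_right hcomm).eq, ← mul_add, add_sub_cancel, mul_one]

namespace IsGradedInvolution

theorem blockUnit_mem_isometryGroup (hτ : IsGradedInvolution θ τ m) (hp : IsIdempotentElem p)
    (hcomm : Commute (h : A) p) (hh : h ∈ hτ.isometryGroup) (hθp : θ p = p) (hτp : τ p = p) :
    blockUnit hp hcomm ∈ hτ.isometryGroup := by
  refine ⟨?_, ?_⟩
  · rw [coe_blockUnit, map_add, map_sub, _root_.map_mul, _root_.map_one, hh.1, hθp]
  · rw [coe_blockUnit, map_add, map_sub, hτ.map_mul, hτ.map_one, hh.2, hτp, coe_inv_blockUnit,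
      hcomm.units_inv_left.eq]

theorem map_eq_one_of_map_eq_one_sub (hτ : IsGradedInvolution θ τ m) (hχ : ∀ x, χ (τ x) = χ x)
    (hh : h ∈ hτ.isometryGroup) (hp : IsIdempotentElem p) (hcomm : Commute (h : A) p)
    (hτp : τ p = 1 - p) : χ h = 1 := by
  have hq : τ (1 - p) = p := by rw [map_sub, hτ.map_one, hτp, sub_sub_cancel]
  have hinv : τ (blockUnit hp.one_sub ((Commute.one_right (h : A)).sub_right hcomm)) =
      ((blockUnit hp hcomm)⁻¹ : Aˣ) := by
    rw [coe_blockUnit, coe_inv_blockUnit, map_add, map_sub, hτ.map_mul, hτ.map_one, hh.2, hq,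
      hcomm.units_inv_left.eq]
  rw [← blockUnit_mul_blockUnit_one_sub hp hcomm, _root_.map_mul, ← hχ (blockUnit hp.one_sub _ : A),
    hinv, ← _root_.map_mul, Units.mul_inv, _root_.map_one]

end IsGradedInvolution

end Isometries

theorem IsGradedInvolution.map_eq_one_of_mul_self_eq_neg_one {k A : Type*} [Field k]
    [IsAlgClosed k] [Ring A] [Algebra k A] {θ : A ≃ₐ[k] A} {τ : A →ₗ[k] A} {m : ℕ} {χ : A →* k}
    {K : A} {h : Aˣ} (hτ : IsGradedInvolution θ τ m) (hχ : ∀ x, χ (τ x) = χ x) (h2 : (2 : k) ≠ 0)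
    (hK : K * K = -1) (hτK : τ K = -K) (hh : h ∈ hτ.isometryGroup) (hcomm : Commute (h : A) K) :
    χ h = 1 := by
  obtain ⟨ι, hι⟩ := IsAlgClosed.exists_eq_mul_self (-1 : k)
  refine hτ.map_eq_one_of_map_eq_one_sub hχ hh (p := (2⁻¹ : k) • (1 + ι • K)) ?_
    (((Commute.one_right _).add_right (hcomm.smul_right ι)).smul_right _) ?_
  · have hsq : (1 + ι • K) * (1 + ι • K) = (2 : k) • (1 + ι • K) := by
      rw [mul_add, add_mul, add_mul, smul_mul_smul_comm, ← hι, hK, two_smul]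
      simp only [mul_one, one_mul, smul_neg, neg_smul, one_smul, neg_neg]
      abel
    rw [IsIdempotentElem, smul_mul_smul_comm, hsq, smul_smul, inv_mul_cancel_right₀ h2]
  · rw [map_smul, map_add, map_smul, hτ.map_one, hτK, eq_sub_iff_add_eq, ← smul_add,
      smul_neg, add_add_add_comm, neg_add_cancel, add_zero, ← two_smul k (1 : A), smul_smul,
      inv_mul_cancel₀ h2, one_smul]

section MatrixUnits

variable {k A ι : Type*} [Field k] [Ring A] [Algebra k A] {θ : A ≃ₐ[k] A} {τ : A →ₗ[k] A}
  {m : ℕ} {ζ : k} {c : Submodule k A} {e : ι → A} {E : ι → ι → A}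

/-- A system of matrix units extending the idempotents `e i = E i i` of a frame, and compatible
with the involution. Its permutation matrices realize the symmetric group in the little Weyl
group. -/
structure IsMatrixUnits (θ : A ≃ₐ[k] A) (τ : A →ₗ[k] A) (m : ℕ) (e : ι → A) (E : ι → ι → A) :
    Prop where
  apply_self : ∀ i, E i i = e i
  apply_mul_apply : ∀ i l j, E i l * E l j = E i j
  map_apply : ∀ i l, τ (E i l) = (θ ^ (m / 2)) (E l i)

namespace IsMatrixUnits

theorem mul_apply (hE : IsMatrixUnits θ τ m e E) (i l : ι) : e i * E i l = E i l := by
  rw [← hE.apply_self, hE.apply_mul_apply]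

theorem apply_mul (hE : IsMatrixUnits θ τ m e E) (i l : ι) : E i l * e l = E i l := by
  rw [← hE.apply_self, hE.apply_mul_apply]

theorem mul_apply_eq_zero (hE : IsMatrixUnits θ τ m e E) (he : OrthogonalIdempotents e)
    {i j : ι} (hij : i ≠ j) (l : ι) : e i * E j l = 0 := by
  rw [← hE.mul_apply, ← mul_assoc, he.ortho hij, zero_mul]

theorem apply_mul_eq_zero (hE : IsMatrixUnits θ τ m e E) (he : OrthogonalIdempotents e)
    {j l : ι} (hlj : l ≠ j) (i : ι) : E i l * e j = 0 := by
  rw [← hE.apply_mul, mul_assoc, he.ortho hlj, mul_zero]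

end IsMatrixUnits

variable [Fintype ι]

/-- The permutation matrix of `σ` written in the matrix units `E`. -/
def permSum (E : ι → ι → A) (σ : Equiv.Perm ι) : A := ∑ i, E (σ i) i

namespace IsMatrixUnits

theorem permSum_mul (hE : IsMatrixUnits θ τ m e E) (he : OrthogonalIdempotents e)
    (σ : Equiv.Perm ι) (j : ι) : permSum E σ * e j = E (σ j) j := by
  rw [permSum, Finset.sum_mul, Finset.sum_eq_single j, hE.apply_mul]
  · exact fun i _ hij => hE.apply_mul_eq_zero he hij _
  · exact fun hj => (hj (Finset.mem_univ j)).elim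

theorem mul_permSum (hE : IsMatrixUnits θ τ m e E) (he : OrthogonalIdempotents e)
    (σ : Equiv.Perm ι) (j : ι) : e (σ j) * permSum E σ = E (σ j) j := by
  rw [permSum, Finset.mul_sum, Finset.sum_eq_single j, hE.mul_apply]
  · exact fun i _ hij => hE.mul_apply_eq_zero he (σ.injective.ne hij.symm) _
  · exact fun hj => (hj (Finset.mem_univ j)).elim

theorem permSum_mul_permSum (hE : IsMatrixUnits θ τ m e E) (he : OrthogonalIdempotents e)
    (σ ρ : Equiv.Perm ι) : permSum E σ * permSum E ρ = permSum E (σ * ρ) := by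
  rw [permSum.eq_def E ρ, Finset.mul_sum, permSum.eq_def E (σ * ρ)]
  refine Finset.sum_congr rfl fun i _ => ?_
  rw [← hE.mul_apply, ← mul_assoc, hE.permSum_mul he, hE.apply_mul_apply, Equiv.Perm.mul_apply]

theorem permSum_one (hE : IsMatrixUnits θ τ m e E) : permSum E 1 = ∑ i, e i :=
  Finset.sum_congr rfl fun i _ => hE.apply_self i

theorem map_permSum (hE : IsMatrixUnits θ τ m e E) (σ : Equiv.Perm ι) :
    τ (permSum E σ) = (θ ^ (m / 2)) (permSum E σ⁻¹) := by
  simp only [permSum, map_sum, hE.map_apply]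
  rw [← Equiv.sum_comp σ fun i => (θ ^ (m / 2)) (E (σ⁻¹ i) i)]
  simp

theorem orthTranslates (hE : IsMatrixUnits θ τ m e E) (h : IsFrame θ τ m ζ c e) {p q : A}
    (hp : p * permSum E 1 = p) (hq : permSum E 1 * q = q) : OrthTranslates θ m p q := by
  refine OrthTranslates.of_mul_eq (fun j hj hjm => ?_) hp hq
  rw [hE.permSum_one, map_sum, Finset.sum_mul_sum]
  exact Finset.sum_eq_zero fun i _ => Finset.sum_eq_zero fun l _ => h.orthTranslates i l j hj hjm

theorem orthTranslates_permSum (hE : IsMatrixUnits θ τ m e E) (h : IsFrame θ τ m ζ c e)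
    (σ ρ : Equiv.Perm ι) :
    OrthTranslates θ m (permSum E 1 - permSum E σ) (permSum E 1 - permSum E ρ) := by
  apply hE.orthTranslates h <;>
  simp only [mul_sub, sub_mul, hE.permSum_mul_permSum h.orthogonal, one_mul, mul_one]

variable [NeZero m]

/-- The unit permuting the ranges of all `(θ ^ j) (e i)` by `σ`, and acting trivially on the
common kernel. -/
def permUnit (hE : IsMatrixUnits θ τ m e E) (h : IsFrame θ τ m ζ c e)
    (hτ : IsGradedInvolution θ τ m) : Equiv.Perm ι →* Aˣ :=
  MonoidHom.toHomUnits
    { toFun σ := 1 - lagrangeResolvent θ m 1 (permSum E 1 - permSum E σ)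
      map_one' := by rw [sub_self, map_zero, sub_zero]
      map_mul' σ ρ := by
        rw [(hE.orthTranslates_permSum h σ ρ).one_sub_mul_one_sub hτ.pow_eq_one]
        simp only [mul_sub, sub_mul, hE.permSum_mul_permSum h.orthogonal, one_mul, mul_one]
        congr 2
        abel }

variable (hE : IsMatrixUnits θ τ m e E) (h : IsFrame θ τ m ζ c e)
  (hτ : IsGradedInvolution θ τ m)

theorem coe_permUnit (σ : Equiv.Perm ι) : (hE.permUnit h hτ σ : A) =
    1 - lagrangeResolvent θ m 1 (permSum E 1 - permSum E σ) := rfl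

theorem permUnit_mem_isometryGroup (σ : Equiv.Perm ι) :
    hE.permUnit h hτ σ ∈ hτ.isometryGroup := by
  refine ⟨?_, ?_⟩
  · rw [coe_permUnit, map_sub, map_one, apply_lagrangeResolvent_one hτ.pow_eq_one]
  · rw [← map_inv, coe_permUnit, coe_permUnit, map_sub, hτ.map_one, hτ.map_lagrangeResolvent,
      map_sub, hE.map_permSum, hE.map_permSum, inv_one, ← map_sub,
      ← pow_lagrangeResolvent, pow_apply_lagrangeResolvent_one hτ.pow_eq_one]

theorem innerAut_permUnit (hζ : ζ ^ m = 1) (σ : Equiv.Perm ι) (j : ι) :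
    innerAut k (hE.permUnit h hτ σ) (lagrangeResolvent θ m ζ (e j)) =
      lagrangeResolvent θ m ζ (e (σ j)) := by
  have hone (i : ι) : E ((1 : Equiv.Perm ι) i) i = e i := hE.apply_self i
  have hleft (i : ι) : e i * permSum E 1 = e i := (hE.mul_permSum h.orthogonal 1 i).trans (hone i)
  have hright (i : ι) : permSum E 1 * e i = e i := (hE.permSum_mul h.orthogonal 1 i).trans (hone i)
  have hcorner (i : ι) : OrthTranslates θ m (permSum E 1 - permSum E σ) (e i) ∧
      OrthTranslates θ m (e i) (permSum E 1 - permSum E σ) := by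
    constructor <;> apply hE.orthTranslates h <;>
    simp only [hleft, hright, mul_sub, sub_mul, hE.permSum_mul_permSum h.orthogonal, one_mul,
      mul_one]
  rw [innerAut_eq_iff, coe_permUnit, sub_mul, one_mul, mul_sub, mul_one,
    (hcorner j).1.lagrangeResolvent_mul_lagrangeResolvent hτ.pow_eq_one hζ,
    (hcorner (σ j)).2.lagrangeResolvent_mul_lagrangeResolvent hτ.pow_eq_one (one_pow m), one_mul,
    mul_one, ← map_sub, ← map_sub, sub_mul, mul_sub, hleft, hright, sub_sub_cancel,
    sub_sub_cancel, hE.permSum_mul h.orthogonal, hE.mul_permSum h.orthogonal]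

theorem map_permUnit {χ : A →* k} (hχ : ∀ x, χ (θ x) = χ x) (hm : Even m)
    (σ : Equiv.Perm ι) : χ (hE.permUnit h hτ σ) = 1 := by
  classical
  induction σ using Equiv.Perm.swap_induction_on with
  | one => simp
  | swap_mul σ x y _ ih =>
    rw [map_mul, Units.val_mul, map_mul, ih, mul_one, coe_permUnit]
    refine (hE.orthTranslates_permSum h _ _).map_one_sub_lagrangeResolvent_eq_one hχ hm ?_
    simp only [mul_sub, sub_mul, hE.permSum_mul_permSum h.orthogonal, one_mul, mul_one,
      Equiv.swap_mul_self]
    abel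

end IsMatrixUnits

end MatrixUnits

section Diagonal

variable {k A ι : Type*} [Field k] [Ring A] [Algebra k A] {θ : A ≃ₐ[k] A} {τ : A →ₗ[k] A}
  {m s : ℕ} {ζ : k} {c : Submodule k A} {e : ι → A} {u : Aˣ} {χ : A →* k}

theorem commute_lagrangeResolvent_one (hθ : θ ^ m = 1) (hu : θ = innerAut k u⁻¹) (x : A) :
    Commute (u : A) (lagrangeResolvent θ m (1 : k) x) := by
  have hfix := apply_lagrangeResolvent_one (k := k) hθ x
  nth_rw 1 [hu] at hfix
  rw [innerAut_eq_iff] at hfix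
  exact Commute.units_inv_left_iff.1 hfix

theorem mul_eq_smul_mul_of_mem_skewEigenspace (hu : θ = innerAut k u⁻¹) {x : A}
    (hx : x ∈ skewEigenspace θ τ ζ) : u * x = ζ • (x * u) := by
  have hθx := (mem_skewEigenspace.1 hx).2
  rw [hu, innerAut_apply, inv_inv] at hθx
  nth_rw 1 [← hθx]
  rw [mul_smul_comm, mul_assoc, Units.mul_inv_cancel_left]

namespace IsFrame

variable [NeZero m]

theorem isIdempotentElem_lagrangeResolvent_one (h : IsFrame θ τ m ζ c e) (hθ : θ ^ m = 1)
    (i : ι) : IsIdempotentElem (lagrangeResolvent θ m (1 : k) (e i)) := by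
  rw [IsIdempotentElem, (h.orthTranslates i i).lagrangeResolvent_mul_lagrangeResolvent hθ
    (one_pow m), one_mul, (h.orthogonal.idem i).eq]

/-- The unit acting as `u` on the sum of the ranges of the `(θ ^ j) (e i)` and trivially on the
other weight spaces; it generates the diagonal part of the little Weyl group. -/
def diagUnit (h : IsFrame θ τ m ζ c e) (hθ : θ ^ m = 1) (hu : θ = innerAut k u⁻¹) (i : ι) : Aˣ :=
  blockUnit (h.isIdempotentElem_lagrangeResolvent_one hθ i)
    (commute_lagrangeResolvent_one hθ hu (e i))

variable (h : IsFrame θ τ m ζ c e) (hτ : IsGradedInvolution θ τ m) (hu : θ = innerAut k u⁻¹)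

theorem diagUnit_mem_isometryGroup (hmem : u ∈ hτ.isometryGroup) (i : ι) :
    h.diagUnit hτ.pow_eq_one hu i ∈ hτ.isometryGroup := by
  refine hτ.blockUnit_mem_isometryGroup _ _ hmem (apply_lagrangeResolvent_one hτ.pow_eq_one _) ?_
  rw [hτ.map_lagrangeResolvent, h.map_eq, ← pow_lagrangeResolvent,
    pow_apply_lagrangeResolvent_one hτ.pow_eq_one]

theorem innerAut_diagUnit [DecidableEq ι] (hc : c ≤ skewEigenspace θ τ ζ) (hζ : ζ ^ m = 1)
    (i j : ι) : innerAut k (h.diagUnit hτ.pow_eq_one hu i) (lagrangeResolvent θ m ζ (e j)) =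
      (Pi.mulSingle i ζ : ι → k) j • lagrangeResolvent θ m ζ (e j) := by
  have hub := mul_eq_smul_mul_of_mem_skewEigenspace hu (hc (h.lagrangeResolvent_mem j))
  have hFb : lagrangeResolvent θ m 1 (e i) * lagrangeResolvent θ m ζ (e j) =
      if i = j then lagrangeResolvent θ m ζ (e j) else 0 := by
    rw [(h.orthTranslates i j).lagrangeResolvent_mul_lagrangeResolvent hτ.pow_eq_one hζ, one_mul,
      h.orthogonal.mul_eq]
    aesop
  have hbF : lagrangeResolvent θ m ζ (e j) * lagrangeResolvent θ m 1 (e i) =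
      if i = j then lagrangeResolvent θ m ζ (e j) else 0 := by
    rw [(h.orthTranslates j i).lagrangeResolvent_mul_lagrangeResolvent hτ.pow_eq_one
      (one_pow m), mul_one, h.orthogonal.mul_eq]
    aesop
  rw [innerAut_eq_iff, diagUnit, coe_blockUnit, add_mul, sub_mul, one_mul, mul_assoc, hFb,
    smul_mul_assoc, mul_add, mul_sub, mul_one, hbF,
    (commute_lagrangeResolvent_one hτ.pow_eq_one hu (e i)).eq, ← mul_assoc, hbF]
  rcases eq_or_ne i j with rfl | hij
  · simp only [if_true, sub_self, zero_add, Pi.mulSingle_eq_same, hub]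
  · simp only [hij, if_false, sub_zero, mul_zero, zero_mul, add_zero,
      Pi.mulSingle_eq_of_ne hij.symm, one_smul]

theorem exists_innerAut_eq_smul [Fintype ι] (hc : c ≤ skewEigenspace θ τ ζ)
    (hζ : IsPrimitiveRoot ζ m) (hmem : u ∈ hτ.isometryGroup)
    (hχ : ∀ i, χ (h.diagUnit hτ.pow_eq_one hu i) = ζ ^ s) {t : ι → k} (ht : ∀ i, t i ^ m = 1) :
    ∃ g ∈ hτ.isometryGroup, χ g = (∏ i, t i) ^ s ∧
      ∀ j, innerAut k g (lagrangeResolvent θ m ζ (e j)) =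
        t j • lagrangeResolvent θ m ζ (e j) := by
  classical
  let S : Submonoid (ι → k) :=
    { carrier := {t | ∃ g ∈ hτ.isometryGroup, χ g = (∏ i, t i) ^ s ∧
        ∀ j, innerAut k g (lagrangeResolvent θ m ζ (e j)) = t j • lagrangeResolvent θ m ζ (e j)}
      one_mem' := ⟨1, one_mem _, by simp, by simp⟩
      mul_mem' := by
        rintro t₁ t₂ ⟨g₁, hg₁, hχ₁, hb₁⟩ ⟨g₂, hg₂, hχ₂, hb₂⟩
        refine ⟨g₁ * g₂, mul_mem hg₁ hg₂, ?_, fun j => ?_⟩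
        · simp only [Units.val_mul, map_mul, hχ₁, hχ₂, Pi.mul_apply, Finset.prod_mul_distrib,
            mul_pow]
        · rw [map_mul, AlgEquiv.mul_apply, hb₂, map_smul, hb₁, smul_smul, mul_comm, Pi.mul_apply] }
  suffices htS : t ∈ S from htS
  have hsingle (i : ι) : (Pi.mulSingle i ζ : ι → k) ∈ S :=
    ⟨h.diagUnit hτ.pow_eq_one hu i, h.diagUnit_mem_isometryGroup hτ hu hmem i, by
      rw [hχ, Fintype.prod_pi_mulSingle'], fun j => h.innerAut_diagUnit hτ hu hc hζ.pow_eq_one i j⟩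
  rw [← Finset.univ_prod_mulSingle t]
  refine prod_mem fun i _ => ?_
  obtain ⟨a, -, ha⟩ := hζ.eq_pow_of_pow_eq_one (ht i)
  rw [← ha, Pi.mulSingle_pow]
  exact pow_mem (hsingle i) a

theorem exists_innerAut_eq_smul_perm [Fintype ι] {E : ι → ι → A} (hE : IsMatrixUnits θ τ m e E)
    (hc : c ≤ skewEigenspace θ τ ζ) (hζ : IsPrimitiveRoot ζ m) (hm : Even m)
    (hmem : u ∈ hτ.isometryGroup) (hχθ : ∀ x, χ (θ x) = χ x)
    (hχ : ∀ i, χ (h.diagUnit hτ.pow_eq_one hu i) = ζ ^ s) (σ : Equiv.Perm ι) {t : ι → k}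
    (ht : ∀ i, t i ^ m = 1) :
    ∃ g ∈ hτ.isometryGroup, χ g = (∏ i, t i) ^ s ∧
      ∀ j, innerAut k g (lagrangeResolvent θ m ζ (e j)) =
        t j • lagrangeResolvent θ m ζ (e (σ j)) := by
  classical
  obtain ⟨g, hg, hχg, hgb⟩ := h.exists_innerAut_eq_smul hτ hu hc hζ hmem hχ ht
  refine ⟨hE.permUnit h hτ σ * g, mul_mem (hE.permUnit_mem_isometryGroup h hτ σ) hg, ?_,
    fun j => ?_⟩
  · rw [Units.val_mul, map_mul, hE.map_permUnit h hτ hχθ hm, one_mul, hχg]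
  · rw [map_mul, AlgEquiv.mul_apply, hgb, map_smul,
      hE.innerAut_permUnit h hτ hζ.pow_eq_one]

end IsFrame

end Diagonal

section GramMatrix

variable {k N : Type*} [Field k] [Fintype N] {C : Matrix N N k}

theorem exists_transpose_mul_mul_eq_one [IsAlgClosed k] (h2 : (2 : k) ≠ 0) (hC0 : C ≠ 0)
    (hC : Cᵀ = C) : ∃ Z : Matrix N Unit k, Zᵀ * C * Z = 1 := by
  classical
  have := invertibleOfNonzero h2
  obtain ⟨v, hv⟩ := LinearMap.BilinForm.exists_bilinForm_self_ne_zero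
    (toBilin'.map_ne_zero_iff.2 hC0)
    (LinearMap.BilinForm.isSymm_iff.1 (isSymm_toBilin'_iff_isSymm.2 hC))
  rw [toBilin'_apply'] at hv
  obtain ⟨s, hs⟩ := IsAlgClosed.exists_eq_mul_self (v ⬝ᵥ C *ᵥ v)⁻¹
  refine ⟨replicateCol Unit (s • v), Matrix.ext fun a b => ?_⟩
  rw [transpose_replicateCol, Matrix.mul_assoc, ← replicateCol_mulVec, one_apply_eq,
    replicateRow_mul_replicateCol_apply, mulVec_smul, dotProduct_smul, smul_dotProduct,
    smul_smul, ← hs, smul_eq_mul, inv_mul_cancel₀ hv]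

theorem exists_mul_transpose_mul_mul_eq_one (h2 : (2 : k) ≠ 0) (hC0 : C ≠ 0) (hC : Cᵀ = -C) :
    ∃ Z : Matrix N (Fin 2) k, !![0, -1; 1, 0] * (Zᵀ * C * Z) = 1 := by
  classical
  have hskew (i j : N) : C j i = -C i j := congrFun (congrFun hC i) j
  have hdiag (i : N) : C i i = 0 := by
    refine (mul_eq_zero.1 (?_ : 2 * C i i = 0)).resolve_left h2
    rw [two_mul, add_eq_zero_iff_eq_neg, ← hskew]
  obtain ⟨i, j, hij⟩ : ∃ i j, C i j ≠ 0 := by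
    by_contra! hzero
    exact hC0 (Matrix.ext hzero)
  let v : Fin 2 → N → k := ![Pi.single i 1, Pi.single j (C i j)⁻¹]
  have hgram : of v * C * (of v)ᵀ = !![0, 1; -1, 0] := by
    have hentry (a b : Fin 2) : (of v * C * (of v)ᵀ) a b = v a ⬝ᵥ C *ᵥ v b := by
      rw [Matrix.mul_assoc]
      rfl
    ext a b
    rw [hentry]
    fin_cases a <;> fin_cases b <;> simp [v, hdiag, hij, hskew i j]
  refine ⟨(of v)ᵀ, ?_⟩
  rw [transpose_transpose, hgram]
  ext a b
  fin_cases a <;> fin_cases b <;> simp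

end GramMatrix

section Factorization

variable {k N ι κ : Type*} [Field k] [Fintype N] [DecidableEq N] [Fintype κ] [DecidableEq κ]
  {J : Matrix N N k} {θ : Matrix N N k ≃ₐ[k] Matrix N N k} {m : ℕ} {ζ ε : k}
  {c : Submodule k (Matrix N N k)} {e : ι → Matrix N N k}

theorem IsFrame.exists_isMatrixUnits [Nonempty κ] [NeZero m] {V : (Matrix N N k)ˣ}
    (h : IsFrame θ (formAdjoint J) m ζ c e) (hJ : IsUnit J.det)
    (hτ : IsGradedInvolution θ (formAdjoint J) m) (hc : IsRootMaximal θ (formAdjoint J) m ζ c)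
    (hζ : IsPrimitiveRoot ζ m) (hm : Even m) (hV : θ ^ (m / 2) = innerAut k V) (hε : ε * ε = 1)
    (hJV : (J * (V : Matrix N N k))ᵀ = ε • (J * (V : Matrix N N k))) {S : Matrix κ κ k}
    (hS : Sᵀ = ε • S)
    (hZ : ∀ C : Matrix N N k, C ≠ 0 → Cᵀ = ε • C → ∃ Z : Matrix N κ k, S * (Zᵀ * C * Z) = 1) :
    ∃ (X : ι → Matrix N κ k) (Y : ι → Matrix κ N k), (∀ i, Y i * X i = 1) ∧
      IsMatrixUnits θ (formAdjoint J) m e fun i l => X i * Y l := by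
  have hτV {x y : Matrix N N k} : formAdjoint J x = (θ ^ (m / 2)) y ↔
      xᵀ * (J * (V : Matrix N N k)) = J * V * y := by
    rw [hV, formAdjoint_eq_innerAut_iff hJ]
  have hB : IsUnit (J * (V : Matrix N N k)) := ((isUnit_iff_isUnit_det J).2 hJ).mul V.isUnit
  generalize J * (V : Matrix N N k) = B at hτV hB hJV
  have hBe (i : ι) : (e i)ᵀ * B = B * e i := hτV.1 (h.map_eq i)
  have hidem (i : ι) : e i * e i = e i := h.orthogonal.idem i
  choose Z hSZ using fun i => hZ (B * e i) (by
    rw [Ne, hB.mul_right_eq_zero]; exact h.ne_zero i) (by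
    rw [transpose_mul, hJV, Matrix.mul_smul, hBe])
  let X (i : ι) : Matrix N κ k := e i * Z i
  let Y (i : ι) : Matrix κ N k := S * ((X i)ᵀ * B)
  have heX (i : ι) : e i * X i = X i := by
    rw [← Matrix.mul_assoc, hidem]
  have hXB (i : ι) : (X i)ᵀ * B = (Z i)ᵀ * (B * e i) := by
    rw [transpose_mul, Matrix.mul_assoc, hBe]
  have hYe (i : ι) : Y i * e i = Y i := by
    rw [Matrix.mul_assoc, hXB, Matrix.mul_assoc, Matrix.mul_assoc B, hidem, ← hXB]
  have hYX (i : ι) : Y i * X i = 1 := by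
    rw [← Matrix.mul_assoc, hYe, Matrix.mul_assoc, hXB, hSZ]
  have hadj (i l : ι) : formAdjoint J (X i * Y l) = (θ ^ (m / 2)) (X l * Y i) := by
    rw [hτV]
    simp only [Y, transpose_mul, transpose_transpose, hJV, hS, Matrix.mul_assoc]
    simp only [Matrix.smul_mul, Matrix.mul_smul, smul_smul, hε, one_smul]
  refine ⟨X, Y, hYX, fun i => ?_, fun i l j => ?_, hadj⟩
  · refine h.eq_of_mul_eq hτ hc hζ hm ?_ (fun h0 => ?_) ?_ ?_ (hadj i i)
    · rw [IsIdempotentElem, Matrix.mul_assoc, ← Matrix.mul_assoc (Y i), hYX, Matrix.one_mul]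
    · have h1 := congrArg (Y i * · * X i) h0
      simp only [← Matrix.mul_assoc, hYX] at h1
      simp only [Matrix.mul_assoc, hYX, Matrix.mul_one, Matrix.zero_mul, Matrix.mul_zero,
        one_ne_zero] at h1
    · rw [← Matrix.mul_assoc, heX]
    · rw [Matrix.mul_assoc, hYe]
  · rw [Matrix.mul_assoc, ← Matrix.mul_assoc (Y l), hYX, Matrix.one_mul]

theorem transpose_mul_eq_smul (hJ : IsUnit J.det) (hsymm : Jᵀ = J) {V : Matrix N N k}
    (hV : formAdjoint J V = ε • V) : (J * V)ᵀ = ε • (J * V) := by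
  rw [transpose_mul, hsymm, (formAdjoint_eq_iff hJ).1 hV, Matrix.mul_smul]

variable {u : (Matrix N N k)ˣ}

theorem transpose_mul_inv_pow_eq_smul (hJ : IsUnit J.det) (hsymm : Jᵀ = J)
    (hτ : IsGradedInvolution θ (formAdjoint J) m) (hm : Even m) (hmem : u ∈ hτ.isometryGroup)
    (hum : (u : Matrix N N k) ^ m = ε • 1) :
    (J * ((u⁻¹ ^ (m / 2) : (Matrix N N k)ˣ) : Matrix N N k))ᵀ =
      ε • (J * ((u⁻¹ ^ (m / 2) : (Matrix N N k)ˣ) : Matrix N N k)) := by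
  refine transpose_mul_eq_smul hJ hsymm ?_
  rw [(pow_mem (inv_mem hmem) (m / 2)).2, inv_pow, inv_inv]
  refine (Units.mul_left_inj (u ^ (m / 2))).1 ?_
  rw [Matrix.smul_mul, Units.inv_mul, ← hum, ← Units.val_mul, ← pow_add, ← two_mul,
    Nat.two_mul_div_two_of_even hm, Units.val_pow_eq_pow_val]

theorem IsFrame.exists_mul_eq_one_of_pow_eq_one [IsAlgClosed k] [NeZero m] (h2 : (2 : k) ≠ 0)
    (h : IsFrame θ (formAdjoint J) m ζ c e) (hJ : IsUnit J.det) (hsymm : Jᵀ = J)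
    (hτ : IsGradedInvolution θ (formAdjoint J) m) (hc : IsRootMaximal θ (formAdjoint J) m ζ c)
    (hζ : IsPrimitiveRoot ζ m) (hm : Even m) (hu : θ = innerAut k u⁻¹)
    (hmem : u ∈ hτ.isometryGroup) (hum : (u : Matrix N N k) ^ m = 1) :
    ∃ (X : ι → Matrix N Unit k) (Y : ι → Matrix Unit N k), (∀ i, Y i * X i = 1) ∧
      IsMatrixUnits θ (formAdjoint J) m e fun i l => X i * Y l := by
  refine h.exists_isMatrixUnits (ε := 1) (S := 1) hJ hτ hc hζ hm (by rw [hu, ← map_pow])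
    (one_mul 1) (transpose_mul_inv_pow_eq_smul hJ hsymm hτ hm hmem (by rwa [one_smul]))
    (by rw [transpose_one, one_smul]) fun C hC0 hC => ?_
  rw [one_smul] at hC
  simpa only [Matrix.one_mul] using exists_transpose_mul_mul_eq_one h2 hC0 hC

theorem IsFrame.exists_mul_eq_one_of_pow_eq_neg_one [NeZero m] (h2 : (2 : k) ≠ 0)
    (h : IsFrame θ (formAdjoint J) m ζ c e) (hJ : IsUnit J.det) (hsymm : Jᵀ = J)
    (hτ : IsGradedInvolution θ (formAdjoint J) m) (hc : IsRootMaximal θ (formAdjoint J) m ζ c)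
    (hζ : IsPrimitiveRoot ζ m) (hm : Even m) (hu : θ = innerAut k u⁻¹)
    (hmem : u ∈ hτ.isometryGroup) (hum : (u : Matrix N N k) ^ m = -1) :
    ∃ (X : ι → Matrix N (Fin 2) k) (Y : ι → Matrix (Fin 2) N k), (∀ i, Y i * X i = 1) ∧
      IsMatrixUnits θ (formAdjoint J) m e fun i l => X i * Y l := by
  refine h.exists_isMatrixUnits (ε := -1) (S := !![0, -1; 1, 0]) hJ hτ hc hζ hm
    (by rw [hu, ← map_pow]) (by rw [neg_one_mul, neg_neg])
    (transpose_mul_inv_pow_eq_smul hJ hsymm hτ hm hmem (by rwa [neg_one_smul]))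
    (by simp [← Matrix.ext_iff]) fun C hC0 hC => ?_
  rw [neg_one_smul] at hC
  exact exists_mul_transpose_mul_mul_eq_one h2 hC0 hC

end Factorization

section CompleteFrame

variable {k A ι : Type*} [Field k] [Ring A] [Algebra k A] {θ : A ≃ₐ[k] A} {τ : A →ₗ[k] A}
  {m : ℕ} {ζ : k} {c : Submodule k A} {e : ι → A}

theorem IsFrame.orthogonalIdempotents_pow (h : IsFrame θ τ m ζ c e) (hθ : θ ^ m = 1) :
    OrthogonalIdempotents fun x : ι × Fin m => (θ ^ (x.2 : ℕ)) (e x.1) where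
  idem x := (h.orthogonal.idem x.1).map (θ ^ (x.2 : ℕ))
  ortho := by
    rintro ⟨i, a⟩ ⟨l, b⟩ hne
    obtain hab | hab | hab := lt_trichotomy (a : ℕ) b
    · obtain ⟨j, hj⟩ := Nat.exists_eq_add_of_lt hab
      simp only [hj, add_assoc, pow_add _ (a : ℕ), AlgEquiv.mul_apply]
      rw [← map_mul, h.orthTranslates i l _ (by omega) (by omega), map_zero]
    · have hil : i ≠ l := fun hil => hne (Prod.ext hil (Fin.ext hab))
      simp only [hab]
      rw [← map_mul, h.orthogonal.ortho hil, map_zero]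
    · obtain ⟨j, hj⟩ := Nat.exists_eq_add_of_lt hab
      simp only [hj, add_assoc, pow_add _ (b : ℕ), AlgEquiv.mul_apply]
      rw [← map_mul, (h.orthTranslates i l).symm hθ (by omega) (by omega), map_zero]

variable {χ : A →* k} {g : Aˣ}

theorem IsGradedInvolution.pow_apply_of_mem_isometryGroup (hτ : IsGradedInvolution θ τ m)
    (hg : g ∈ hτ.isometryGroup) (j : ℕ) : (θ ^ j) g = g := by
  induction j with
  | zero => rfl
  | succ j ih => rw [pow_succ, AlgEquiv.mul_apply, hg.1, ih]

theorem IsFrame.mul_self_eq_one_of_mul_eq_smul (h : IsFrame θ τ m ζ c e)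
    (hτ : IsGradedInvolution θ τ m) (hg : g ∈ hτ.isometryGroup) {s : k} {i : ι}
    (hs : g * e i = s • e i) : s * s = 1 := by
  have hinv : e i * (g⁻¹ : Aˣ) = s • e i := by
    refine (θ ^ (m / 2)).injective ?_
    rw [map_mul, hτ.pow_apply_of_mem_isometryGroup (inv_mem hg), map_smul, ← h.map_eq, ← hg.2,
      ← hτ.map_mul, hs, map_smul]
  have hsq : (s * s) • e i = e i := by
    calc (s * s) • e i = (s • e i) * (s • e i) := by
          rw [smul_mul_smul_comm, (h.orthogonal.idem i).eq]
      _ = e i * (g⁻¹ : Aˣ) * (g * e i) := by rw [hinv, hs]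
      _ = e i := by rw [mul_assoc, Units.inv_mul_cancel_left, (h.orthogonal.idem i).eq]
  have hsub : (s * s - 1) • e i = 0 := by rw [sub_smul, hsq, one_smul, sub_self]
  exact sub_eq_zero.1 ((smul_eq_zero.1 hsub).resolve_right (h.ne_zero i))

variable [Fintype ι]

theorem IsFrame.orthTranslates_sum_smul (h : IsFrame θ τ m ζ c e) (a b : ι → k) :
    OrthTranslates θ m (∑ i, a i • e i) (∑ i, b i • e i) := fun j hj hjm => by
  simp only [map_sum, map_smul, Finset.sum_mul_sum, smul_mul_smul_comm,
    h.orthTranslates _ _ j hj hjm, smul_zero, Finset.sum_const_zero]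

theorem sum_smul_mul_sum_smul_of_orthogonalIdempotents (he : OrthogonalIdempotents e)
    (a b : ι → k) : (∑ i, a i • e i) * ∑ i, b i • e i = ∑ i, (a i * b i) • e i := by
  classical
  simp only [Finset.sum_mul_sum, smul_mul_smul_comm, he.mul_eq, smul_ite, smul_zero,
    Finset.sum_ite_eq, Finset.mem_univ, if_true]

theorem IsFrame.map_eq_one_of_mul_eq_smul (h : IsFrame θ τ m ζ c e)
    (hτ : IsGradedInvolution θ τ m) (hm : Even m) (hχθ : ∀ x, χ (θ x) = χ x)
    (hsum : ∑ i, lagrangeResolvent θ m (1 : k) (e i) = 1) (hg : g ∈ hτ.isometryGroup)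
    (hge : ∀ i, ∃ s : k, g * e i = s • e i) : χ g = 1 := by
  choose s hs using hge
  have hresolvent : (g : A) = 1 - lagrangeResolvent θ m 1 (∑ i, (1 - s i) • e i) := by
    have hL (i : ι) : g * lagrangeResolvent θ m (1 : k) (e i) =
        s i • lagrangeResolvent θ m (1 : k) (e i) := by
      rw [← map_smul, ← hs]
      simp only [lagrangeResolvent_apply, Finset.mul_sum, map_mul,
        hτ.pow_apply_of_mem_isometryGroup hg, mul_smul_comm]
    simp only [sub_smul, one_smul, Finset.sum_sub_distrib, map_sub, map_sum, hsum, map_smul, ← hL]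
    rw [← Finset.mul_sum, hsum, mul_one, sub_sub_cancel]
  rw [hresolvent]
  refine (h.orthTranslates_sum_smul _ _).map_one_sub_lagrangeResolvent_eq_one hχθ hm ?_
  have hsq (i : ι) : (1 - s i) * (1 - s i) = (1 - s i) + (1 - s i) := by
    linear_combination h.mul_self_eq_one_of_mul_eq_smul hτ hg (hs i)
  rw [mul_sub, sub_mul, sub_mul, sum_smul_mul_sum_smul_of_orthogonalIdempotents h.orthogonal]
  simp only [hsq, add_smul, Finset.sum_add_distrib, one_mul, mul_one]
  abel

end CompleteFrame

section Dimension

variable {k N ι : Type*} [Field k] [Fintype N] [DecidableEq N] [Fintype ι]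

theorem card_le_of_orthogonalIdempotents {p : ι → Matrix N N k} (hp : OrthogonalIdempotents p)
    (hp0 : ∀ i, p i ≠ 0) : Fintype.card ι ≤ Fintype.card N := by
  classical
  have hcol (i : ι) : ∃ v, p i *ᵥ v ≠ 0 := by
    by_contra! hzero
    exact hp0 i (Matrix.ext_of_mulVec_single fun j => by rw [hzero, zero_mulVec])
  choose v hv using hcol
  have hindep : LinearIndependent k fun i => p i *ᵥ v i := by
    refine linearIndependent_iff'.2 fun s a hsum i hi => ?_
    have hmul := congrArg (p i *ᵥ ·) hsum
    simp only [mulVec_sum, mulVec_smul, mulVec_mulVec, hp.mul_eq, mulVec_zero] at hmul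
    rw [Finset.sum_eq_single_of_mem i hi fun l _ hli => by simp [hli.symm]] at hmul
    simpa only [if_true, smul_eq_zero, hv i, or_false] using hmul
  simpa only [Module.finrank_fintype_fun_eq_card] using hindep.fintype_card_le_finrank

variable {θ : Matrix N N k ≃ₐ[k] Matrix N N k} {τ : Matrix N N k →ₗ[k] Matrix N N k}
  {m : ℕ} {ζ : k} {c : Submodule k (Matrix N N k)} {e : ι → Matrix N N k}

theorem IsFrame.sum_lagrangeResolvent_one_eq_one (h : IsFrame θ τ m ζ c e) (hθ : θ ^ m = 1)
    (hcard : Fintype.card N ≤ m * Fintype.card ι) :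
    ∑ i, lagrangeResolvent θ m (1 : k) (e i) = 1 := by
  have horth := h.orthogonalIdempotents_pow hθ
  have hsum : ∑ i, lagrangeResolvent θ m (1 : k) (e i) =
      ∑ x : ι × Fin m, (θ ^ (x.2 : ℕ)) (e x.1) := by
    simp only [lagrangeResolvent_apply, one_pow, one_smul, Fintype.sum_prod_type,
      ← Fin.sum_univ_eq_sum_range (fun j => (θ ^ j) (e _))]
  rw [hsum]
  by_contra hne
  have hrest : IsIdempotentElem (1 - ∑ x : ι × Fin m, (θ ^ (x.2 : ℕ)) (e x.1)) :=
    horth.isIdempotentElem_sum.one_sub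
  have hle := card_le_of_orthogonalIdempotents (horth.option _ hrest
    (by rw [sub_mul, horth.isIdempotentElem_sum.eq, one_mul, sub_self])
    (by rw [mul_sub, horth.isIdempotentElem_sum.eq, mul_one, sub_self])) ?_
  · simp only [Fintype.card_option, Fintype.card_prod, Fintype.card_fin] at hle
    linarith
  · rintro (_ | x)
    · exact sub_ne_zero.2 (Ne.symm hne)
    · exact (map_ne_zero_iff _ (θ ^ (x.2 : ℕ)).injective).2 (h.ne_zero x.1)

end Dimension

section Determinant

variable {k N κ : Type*} [Field k] [Fintype N] [Fintype κ] [DecidableEq κ]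
  {X : Matrix N κ k} {Y : Matrix κ N k}

theorem mul_mul_eq_zero_of_mul_eq_one {M : Matrix N N k} (hYX : Y * X = 1)
    (hM : X * Y * M * (X * Y) = 0) : Y * M * X = 0 := by
  calc Y * M * X = Y * X * (Y * M * X) * (Y * X) := by
        rw [hYX, Matrix.one_mul, Matrix.mul_one]
    _ = Y * (X * Y * M * (X * Y)) * X := by simp only [Matrix.mul_assoc]
    _ = 0 := by rw [hM, Matrix.mul_zero, Matrix.zero_mul]

variable [DecidableEq N] {θ : Matrix N N k ≃ₐ[k] Matrix N N k} {m : ℕ} {u : (Matrix N N k)ˣ}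

theorem det_one_sub_add_mul (hYX : Y * X = 1) (v : Matrix N N k) :
    (1 - X * Y + v * (X * Y)).det = (Y * v * X).det := by
  have hrank : 1 - X * Y + v * (X * Y) = 1 + (v - 1) * X * Y := by
    rw [Matrix.mul_assoc, Matrix.sub_mul, Matrix.one_mul]
    abel
  rw [hrank, det_one_add_mul_comm, ← Matrix.mul_assoc, Matrix.mul_sub, Matrix.sub_mul,
    Matrix.mul_one, hYX, add_sub_cancel]

theorem sign_addRight_one {m : ℕ} [NeZero m] (hm : Even m) :
    Equiv.Perm.sign (Equiv.addRight (1 : ZMod m)) = -1 := by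
  obtain ⟨n, rfl⟩ := Nat.exists_eq_add_one_of_ne_zero (NeZero.ne m)
  have hrotate : Equiv.addRight (1 : ZMod (n + 1)) = finRotate (n + 1) :=
    Equiv.ext fun i => (finRotate_apply i).symm
  have hn : Odd n := by rwa [Nat.even_add_one, Nat.not_even_iff_odd] at hm
  exact (congrArg Equiv.Perm.sign hrotate).trans ((sign_finRotate (n + 1)).trans hn.neg_one_pow)

theorem OrthTranslates.mul_zpow_mul [NeZero m] (h : OrthTranslates θ m (X * Y) (X * Y))
    (hu : θ = innerAut k u⁻¹) (hum : u ^ m = 1) (hYX : Y * X = 1) (z : ℤ) :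
    Y * ((u ^ z : (Matrix N N k)ˣ) : Matrix N N k) * X = if (z : ZMod m) = 0 then 1 else 0 := by
  have hone {z : ℤ} (hz : (z : ZMod m) = 0) : u ^ z = 1 := by
    obtain ⟨q, rfl⟩ := (ZMod.intCast_zmod_eq_zero_iff_dvd z m).1 hz
    rw [_root_.zpow_mul, zpow_natCast, hum, _root_.one_zpow]
  split_ifs with hz
  · rw [hone hz, Units.val_one, Matrix.mul_one, hYX]
  · obtain ⟨j, hjm, hjz⟩ : ∃ j < m, (j : ZMod m) = -z :=
      ⟨(-z : ZMod m).val, ZMod.val_lt _, ZMod.natCast_zmod_val _⟩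
    have hj0 : 0 < j := Nat.pos_of_ne_zero fun hj0 => hz <| by
      rwa [hj0, Nat.cast_zero, eq_comm, neg_eq_zero] at hjz
    have huz : u ^ z = u⁻¹ ^ j := by
      rw [inv_pow, eq_inv_iff_mul_eq_one, ← zpow_natCast, ← _root_.zpow_add]
      exact hone (by push_cast; rw [hjz, add_neg_cancel])
    refine mul_mul_eq_zero_of_mul_eq_one hYX ?_
    have horth := h j hj0 hjm
    rwa [hu, ← map_pow, innerAut_apply, ← Matrix.mul_assoc, ← Matrix.mul_assoc,
      Units.mul_left_eq_zero, ← huz] at horth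

theorem lagrangeResolvent_one_mul_eq_mul [NeZero m] {X : Matrix N Unit k} {Y : Matrix Unit N k}
    (hu : θ = innerAut k u⁻¹) : lagrangeResolvent θ m (1 : k) (X * Y) =
      (of fun v a => (((u⁻¹ ^ a.val : (Matrix N N k)ˣ) : Matrix N N k) * X) v () :
        Matrix N (ZMod m) k) *
      (of fun a v => (Y * ((u ^ a.val : (Matrix N N k)ˣ) : Matrix N N k)) () v :
        Matrix (ZMod m) N k) := by
  ext v w
  rw [lagrangeResolvent_apply, Matrix.sum_apply, Matrix.mul_apply]
  symm
  refine Finset.sum_nbij' ZMod.val (fun j => (j : ZMod m)) (by simp [ZMod.val_lt]) (by simp)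
    (by simp) (fun j hj => ZMod.val_cast_of_lt (Finset.mem_range.1 hj)) fun a _ => ?_
  rw [one_pow, one_smul, hu, ← map_pow, innerAut_apply, ← Matrix.mul_assoc _ X,
    Matrix.mul_assoc (_ * X), Matrix.mul_apply, ← inv_pow, inv_inv]
  simp

/-- In the basis of the columns `u ^ (-a) * X`, `a : ZMod m`, multiplication by `u` is the
cyclic permutation of length `m`, which is odd for even `m`. -/
theorem OrthTranslates.det_eq_neg_one [NeZero m] {X : Matrix N Unit k} {Y : Matrix Unit N k}
    (h : OrthTranslates θ m (X * Y) (X * Y)) (hm : Even m)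
    (hu : θ = innerAut k u⁻¹) (hum : u ^ m = 1) (hYX : Y * X = 1) :
    (1 - lagrangeResolvent θ m (1 : k) (X * Y) +
      u * lagrangeResolvent θ m (1 : k) (X * Y)).det = -1 := by
  let C : Matrix N (ZMod m) k :=
    of fun v a => (((u⁻¹ ^ a.val : (Matrix N N k)ˣ) : Matrix N N k) * X) v ()
  let R : Matrix (ZMod m) N k :=
    of fun a v => (Y * ((u ^ a.val : (Matrix N N k)ˣ) : Matrix N N k)) () v
  have hentry (z : ℤ) (a b : ZMod m) :
      (R * ((u ^ z : (Matrix N N k)ˣ) : Matrix N N k) * C) a b = if a + z = b then 1 else 0 := by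
    have hunits : u ^ (a.val + z - b.val : ℤ) = u ^ a.val * u ^ z * u⁻¹ ^ b.val := by
      rw [_root_.zpow_sub, _root_.zpow_add, zpow_natCast, zpow_natCast, inv_pow]
    calc (R * ((u ^ z : (Matrix N N k)ˣ) : Matrix N N k) * C) a b
        = (Y * ((u ^ a.val : (Matrix N N k)ˣ) : Matrix N N k) *
            ((u ^ z : (Matrix N N k)ˣ) : Matrix N N k) *
            (((u⁻¹ ^ b.val : (Matrix N N k)ˣ) : Matrix N N k) * X)) () () := rfl
      _ = (Y * ((u ^ (a.val + z - b.val : ℤ) : (Matrix N N k)ˣ) : Matrix N N k) * X) () () := by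
          rw [hunits, Units.val_mul, Units.val_mul]
          simp only [Matrix.mul_assoc]
      _ = if a + z = b then 1 else 0 := by
          rw [h.mul_zpow_mul hu hum hYX]
          split_ifs <;> simp_all [sub_eq_zero]
  have hRC : R * C = 1 := by
    ext a b
    simpa [one_apply] using hentry 0 a b
  have hRuC : R * (u : Matrix N N k) * C = (Equiv.addRight (1 : ZMod m)).permMatrix k := by
    ext a b
    simpa [Equiv.Perm.permMatrix, PEquiv.toMatrix_apply] using hentry 1 a b
  have hCR : lagrangeResolvent θ m (1 : k) (X * Y) = C * R := lagrangeResolvent_one_mul_eq_mul hu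
  rw [hCR, det_one_sub_add_mul hRC, hRuC, det_permutation, sign_addRight_one hm]
  simp

end Determinant

section Monomial

variable {k A : Type*} [Field k] {m q r : ℕ} {w : Matrix (Fin r) (Fin r) k}

theorem mem_GmqrSet_one_iff : w ∈ GmqrSet k m 1 r ↔ ∃ σ : Equiv.Perm (Fin r),
    (∀ i j, i ≠ σ j → w i j = 0) ∧ ∀ j, w (σ j) j ^ m = 1 := by
  refine exists_congr fun σ => and_congr_right fun _ => and_iff_left_of_imp fun hpow => ?_
  rw [Nat.div_one, ← Finset.prod_pow, Finset.prod_eq_one fun j _ => hpow j]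

theorem GmqrSet_subset_one : GmqrSet k m q r ⊆ GmqrSet k m 1 r := fun _ ⟨σ, hzero, hpow, _⟩ =>
  mem_GmqrSet_one_iff.2 ⟨σ, hzero, hpow⟩

theorem mem_GmqrSet_iff_of_perm [NeZero m] {σ : Equiv.Perm (Fin r)}
    (hzero : ∀ i j, i ≠ σ j → w i j = 0) (hpow : ∀ j, w (σ j) j ^ m = 1) :
    w ∈ GmqrSet k m q r ↔ (∏ j, w (σ j) j) ^ (m / q) = 1 := by
  refine ⟨fun ⟨ρ, hρ, _, hprod⟩ => ?_, fun hprod => ⟨σ, hzero, hpow, hprod⟩⟩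
  have hσρ (j : Fin r) : σ j = ρ j := by
    by_contra hne
    have hj := hpow j
    rw [hρ _ _ hne, zero_pow (NeZero.ne m)] at hj
    exact zero_ne_one hj
  simpa only [hσρ] using hprod

theorem mem_GmqrSet_one_of_pow_succ_eq_self (hpow : ∀ i j, w i j ^ (m + 1) = w i j)
    (hrow : ∀ i j l, j ≠ l → w i j * w i l = 0) (hcol : ∀ j, ∃ i, w i j ≠ 0) :
    w ∈ GmqrSet k m 1 r := by
  choose f hf using hcol
  have hinj : Function.Injective f := fun j l hjl => by
    by_contra hne
    exact mul_ne_zero (hf j) (hjl ▸ hf l) (hrow _ j l hne)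
  refine mem_GmqrSet_one_iff.2 ⟨Equiv.ofBijective f (Finite.injective_iff_bijective.1 hinj),
    fun i j hij => ?_, fun j => mul_right_cancel₀ (hf j) ?_⟩
  · obtain ⟨l, rfl⟩ := (Finite.injective_iff_surjective.1 hinj) i
    have hlj : l ≠ j := fun hlj => hij (congrArg f hlj)
    exact (mul_eq_zero.1 (hrow _ l j hlj)).resolve_left (hf l)
  · rw [Equiv.ofBijective_apply, ← pow_succ, hpow, one_mul]

variable [Ring A] [Algebra k A] {θ : A ≃ₐ[k] A} {τ : A →ₗ[k] A} {ζ : k} {c : Submodule k A}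
  {e : Fin r → A}

theorem IsFrame.mem_GmqrSet_one [NeZero m] (h : IsFrame θ τ m ζ c e) (hθ : θ ^ m = 1)
    (hζ : ζ ^ m = 1) {φ : A ≃ₐ[k] A} (hφ : ∀ j, φ (lagrangeResolvent θ m ζ (e j)) =
      ∑ i, w i j • lagrangeResolvent θ m ζ (e i)) : w ∈ GmqrSet k m 1 r := by
  have heφ (i j : Fin r) : e i * φ (lagrangeResolvent θ m ζ (e j)) = w i j • e i := by
    simp only [hφ, Finset.mul_sum, mul_smul_comm, h.mul_lagrangeResolvent, smul_ite, smul_zero,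
      Finset.sum_ite_eq, Finset.mem_univ, if_true]
  have heφpow (i j : Fin r) (n : ℕ) :
      e i * φ (lagrangeResolvent θ m ζ (e j)) ^ n = w i j ^ n • e i := by
    induction n with
    | zero => simp
    | succ n ih => rw [pow_succ, ← mul_assoc, ih, smul_mul_assoc, heφ, smul_smul, pow_succ]
  refine mem_GmqrSet_one_of_pow_succ_eq_self (fun i j => ?_) (fun i j l hjl => ?_) fun j => ?_
  · refine smul_left_injective k (h.ne_zero i) ?_
    simp only
    rw [← heφpow, ← map_pow, (h.orthTranslates j j).lagrangeResolvent_pow_succ hθ hζ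
      (h.orthogonal.idem j), pow_succ, hζ, one_mul, heφ]
  · have hzero : (w i j * w i l) • e i = 0 := by
      rw [mul_smul, ← heφ i l, ← smul_mul_assoc, ← heφ i j, mul_assoc, ← map_mul,
        (h.orthTranslates j l).lagrangeResolvent_mul_lagrangeResolvent hθ hζ,
        h.orthogonal.ortho hjl, map_zero, map_zero, mul_zero]
    exact (smul_eq_zero.1 hzero).resolve_right (h.ne_zero i)
  · by_contra! hzero
    have hb := hφ j
    simp only [hzero, zero_smul, Finset.sum_const_zero] at hb
    exact h.linearIndependent.ne_zero j ((map_eq_zero_iff φ φ.injective).1 hb)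

end Monomial

section LittleWeylGroup

variable {k N : Type*} [Field k] [Fintype N] [DecidableEq N] {r : ℕ}
  {c : Submodule k (Matrix N N k)} {w : Matrix (Fin r) (Fin r) k}

theorem mem_littleWeylSet_image_units {G : Set (Matrix N N k)ˣ} {b : Fin r → Matrix N N k}
    (hb : Submodule.span k (Set.range b) = c) :
    w ∈ littleWeylSet ((fun g : (Matrix N N k)ˣ => (g : Matrix N N k)) '' G) c b ↔
      ∃ g ∈ G, ∀ j, innerAut k g (b j) = ∑ i, w i j • b i := by
  simp only [littleWeylSet, Set.mem_ofPred_eq, Set.exists_mem_image, ← coe_units_inv]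
  refine exists_congr fun g => and_congr_right fun _ => ⟨fun h => h.2.2, fun h => ?_⟩
  have hle : c.map (innerAut k g).toLinearMap ≤ c := by
    rw [← hb, Submodule.map_span_le]
    rintro _ ⟨j, rfl⟩
    rw [AlgEquiv.toLinearMap_apply, h]
    exact Submodule.sum_smul_mem _ _ fun i _ => Submodule.subset_span (Set.mem_range_self i)
  have heq : c.map (innerAut k g).toLinearMap = c :=
    Submodule.eq_of_le_of_finrank_eq hle (LinearEquiv.finrank_map_eq (innerAut k g).toLinearEquiv c)
  refine ⟨fun x hx => hle ⟨x, hx, rfl⟩, fun x hx => ?_, h⟩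
  rw [← heq] at hx
  obtain ⟨y, hy, rfl⟩ := hx
  simpa [innerAut_apply, Matrix.mul_assoc] using hy

variable {θ : Matrix N N k ≃ₐ[k] Matrix N N k} {τ : Matrix N N k →ₗ[k] Matrix N N k}
  {m q : ℕ} {ζ : k} {e : Fin r → Matrix N N k} {u : (Matrix N N k)ˣ} {χ : Matrix N N k →* k}

theorem IsFrame.commute_of_forall (h : IsFrame θ τ m ζ c e) {g : (Matrix N N k)ˣ}
    (hg : ∀ j, innerAut k g (lagrangeResolvent θ m ζ (e j)) = lagrangeResolvent θ m ζ (e j)) :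
    ∀ x ∈ c, Commute (g : Matrix N N k) x := by
  intro x hx
  rw [← h.span_eq] at hx
  refine (innerAut_eq_iff (k := k)).1 (LinearMap.eqOn_span
    (f := (innerAut k g).toLinearMap) (g := LinearMap.id) ?_ hx)
  rintro _ ⟨j, rfl⟩
  exact hg j

variable [NeZero m] (h : IsFrame θ τ m ζ c e) (hτ : IsGradedInvolution θ τ m)
  (hu : θ = innerAut k u⁻¹) {E : Fin r → Fin r → Matrix N N k}

theorem IsFrame.exists_innerAut_eq_sum (hE : IsMatrixUnits θ τ m e E)
    (hc : c ≤ skewEigenspace θ τ ζ) (hζ : IsPrimitiveRoot ζ m) (hm : Even m)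
    (hmem : u ∈ hτ.isometryGroup) (hχθ : ∀ x, χ (θ x) = χ x)
    (hχ : ∀ i, χ (h.diagUnit hτ.pow_eq_one hu i) = ζ ^ (m / q)) (hw : w ∈ GmqrSet k m 1 r) :
    ∃ g ∈ hτ.isometryGroup, (χ g = 1 ↔ w ∈ GmqrSet k m q r) ∧
      ∀ j, innerAut k g (lagrangeResolvent θ m ζ (e j)) =
        ∑ i, w i j • lagrangeResolvent θ m ζ (e i) := by
  obtain ⟨σ, hzero, hpow⟩ := mem_GmqrSet_one_iff.1 hw
  obtain ⟨g, hg, hχg, hgb⟩ := h.exists_innerAut_eq_smul_perm hτ hu hE hc hζ hm hmem hχθ hχ σ hpow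
  refine ⟨g, hg, by rw [hχg, mem_GmqrSet_iff_of_perm hzero hpow], fun j => ?_⟩
  rw [hgb, Finset.sum_eq_single (σ j) (fun i _ hi => by rw [hzero i j hi, zero_smul]) (by simp)]

theorem IsFrame.littleWeylSet_eq_of_forall_commute (hE : IsMatrixUnits θ τ m e E)
    (hc : c ≤ skewEigenspace θ τ ζ) (hζ : IsPrimitiveRoot ζ m) (hm : Even m)
    (hmem : u ∈ hτ.isometryGroup) (hχθ : ∀ x, χ (θ x) = χ x)
    (hχ : ∀ i, χ (h.diagUnit hτ.pow_eq_one hu i) = ζ ^ (m / q))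
    (hcentralizer : ∀ z ∈ hτ.isometryGroup, (∀ x ∈ c, Commute (z : Matrix N N k) x) → χ z = 1) :
    littleWeylSet ((fun g : (Matrix N N k)ˣ => (g : Matrix N N k)) ''
      {g | g ∈ hτ.isometryGroup ∧ χ g = 1}) c (fun i => lagrangeResolvent θ m ζ (e i)) =
      GmqrSet k m q r := by
  ext w
  rw [mem_littleWeylSet_image_units h.span_eq]
  have hlift {w} := h.exists_innerAut_eq_sum (w := w) hτ hu hE hc hζ hm hmem hχθ hχ
  constructor
  · rintro ⟨g', ⟨hg', hχg'⟩, hgb'⟩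
    obtain ⟨g, hg, hχg, hgb⟩ := hlift (h.mem_GmqrSet_one hτ.pow_eq_one hζ.pow_eq_one hgb')
    have hz := hcentralizer (g⁻¹ * g') (mul_mem (inv_mem hg) hg') <| h.commute_of_forall fun j => by
      rw [map_mul, AlgEquiv.mul_apply, hgb', ← hgb, ← AlgEquiv.mul_apply, ← map_mul,
        inv_mul_cancel, map_one, AlgEquiv.one_apply]
    rw [← hχg]
    calc χ g = χ g * χ (g⁻¹ * g' : (Matrix N N k)ˣ) := by rw [hz, mul_one]
      _ = χ g' := by rw [← map_mul, ← Units.val_mul, mul_inv_cancel_left]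
      _ = 1 := hχg'
  · intro hw
    obtain ⟨g, hg, hχg, hgb⟩ := hlift (GmqrSet_subset_one hw)
    exact ⟨g, ⟨hg, hχg.2 hw⟩, hgb⟩

theorem IsFrame.littleWeylSet_eq_of_exists_commute (hE : IsMatrixUnits θ τ m e E)
    (hc : c ≤ skewEigenspace θ τ ζ) (hζ : IsPrimitiveRoot ζ m) (hm : Even m)
    (hmem : u ∈ hτ.isometryGroup) (hχθ : ∀ x, χ (θ x) = χ x) (hχτ : ∀ x, χ (τ x) = χ x)
    (hχ : ∀ i, χ (h.diagUnit hτ.pow_eq_one hu i) = ζ ^ (m / q)) {z : (Matrix N N k)ˣ}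
    (hz : z ∈ hτ.isometryGroup) (hzc : ∀ x ∈ c, Commute (z : Matrix N N k) x) (hχz : χ z = -1) :
    littleWeylSet ((fun g : (Matrix N N k)ˣ => (g : Matrix N N k)) ''
      {g | g ∈ hτ.isometryGroup ∧ χ g = 1}) c (fun i => lagrangeResolvent θ m ζ (e i)) =
      GmqrSet k m 1 r := by
  ext w
  rw [mem_littleWeylSet_image_units h.span_eq]
  refine ⟨fun ⟨g, _, hgb⟩ => h.mem_GmqrSet_one hτ.pow_eq_one hζ.pow_eq_one hgb, fun hw => ?_⟩
  obtain ⟨g, hg, -, hgb⟩ := h.exists_innerAut_eq_sum hτ hu hE hc hζ hm hmem hχθ hχ hw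
  obtain hχg | hχg := mul_self_eq_one_iff.1 (hτ.map_mul_self_eq_one hχτ hg)
  · exact ⟨g, ⟨hg, hχg⟩, hgb⟩
  · refine ⟨g * z, ⟨mul_mem hg hz, ?_⟩, fun j => ?_⟩
    · rw [Units.val_mul, map_mul, hχg, hχz, neg_one_mul, neg_neg]
    · rw [map_mul, AlgEquiv.mul_apply, innerAut_eq_iff.2 (hzc _ (h.lagrangeResolvent_mem j)), hgb]

end LittleWeylGroup

theorem exists_mul_eq_smul_of_commute {k N : Type*} [Field k] [Fintype N]
    {X : Matrix N Unit k} {Y : Matrix Unit N k} {z : Matrix N N k} (hYX : Y * X = 1)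
    (hz : Commute z (X * Y)) : ∃ s : k, z * (X * Y) = s • (X * Y) := by
  have hscalar : Y * z * X = (Y * z * X) () () • (1 : Matrix Unit Unit k) := by
    ext
    simp
  refine ⟨(Y * z * X) () (), ?_⟩
  calc z * (X * Y) = X * Y * z * (X * Y) := by
        rw [← hz.eq, Matrix.mul_assoc, Matrix.mul_assoc X, ← Matrix.mul_assoc Y, hYX,
          Matrix.one_mul]
    _ = X * (Y * z * X) * Y := by simp only [Matrix.mul_assoc]
    _ = (Y * z * X) () () • (X * Y) := by
        nth_rw 1 [hscalar]
        rw [Matrix.mul_smul, Matrix.mul_one, Matrix.smul_mul]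

section OrthogonalGroup

variable {k N : Type*} [Field k] [Fintype N] [DecidableEq N] {J : Matrix N N k}
  {m r : ℕ} {ζ : k} {c : Submodule k (Matrix N N k)} {e : Fin r → Matrix N N k}
  {u : (Matrix N N k)ˣ}

section

variable (hτ : IsGradedInvolution (innerAut k u⁻¹) (formAdjoint J) m)

theorem exists_mem_isometryGroup_coe_eq_iff (hJ : IsUnit J.det) {x : Matrix N N k} :
    (∃ g ∈ hτ.isometryGroup, (g : Matrix N N k) = x) ↔ xᵀ * J * x = J ∧ x * u = u * x := by
  rw [← formAdjoint_mul_self_eq_one_iff hJ]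
  constructor
  · rintro ⟨g, ⟨hgθ, hgτ⟩, rfl⟩
    exact ⟨by rw [hgτ, Units.inv_mul],
      (Commute.units_inv_left_iff.1 (innerAut_eq_iff.1 hgθ)).symm.eq⟩
  · rintro ⟨hx, hcomm⟩
    refine ⟨⟨x, formAdjoint J x, mul_eq_one_comm.1 hx, hx⟩, ⟨innerAut_eq_iff.2 ?_, rfl⟩, rfl⟩
    exact Commute.units_inv_left (Commute.symm hcomm)

theorem image_isometryGroup_eq (hJ : IsUnit J.det) :
    (fun g : (Matrix N N k)ˣ => (g : Matrix N N k)) ''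
        {g | g ∈ hτ.isometryGroup ∧ detMonoidHom (g : Matrix N N k) = 1} =
      {h : Matrix N N k | hᵀ * J * h = J ∧ h.det = 1 ∧ h * u = u * h} := by
  ext x
  rw [Set.mem_ofPred_eq, and_left_comm, ← exists_mem_isometryGroup_coe_eq_iff hτ hJ]
  constructor
  · rintro ⟨g, ⟨hg, hdet⟩, rfl⟩
    exact ⟨hdet, g, hg, rfl⟩
  · rintro ⟨hdet, g, hg, rfl⟩
    exact ⟨g, ⟨hg, hdet⟩, rfl⟩

end

theorem det_innerAut (g : (Matrix N N k)ˣ) (x : Matrix N N k) : (innerAut k g x).det = x.det := by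
  rw [innerAut_apply, det_units_conj]

section

variable {X : Fin r → Matrix N Unit k} {Y : Fin r → Matrix Unit N k}

theorem IsFrame.det_eq_one_of_card_le (h : IsFrame (innerAut k u⁻¹) (formAdjoint J) m ζ c e)
    (hτ : IsGradedInvolution (innerAut k u⁻¹) (formAdjoint J) m) (hYX : ∀ i, Y i * X i = 1)
    (hE : IsMatrixUnits (innerAut k u⁻¹) (formAdjoint J) m e fun i l => X i * Y l)
    (hm : Even m) (hcard : Fintype.card N ≤ m * r) {z : (Matrix N N k)ˣ} (hz : z ∈ hτ.isometryGroup)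
    (hzc : ∀ x ∈ c, Commute (z : Matrix N N k) x) : (z : Matrix N N k).det = 1 := by
  refine h.map_eq_one_of_mul_eq_smul (χ := detMonoidHom) hτ hm (det_innerAut u⁻¹)
    (h.sum_lagrangeResolvent_one_eq_one hτ.pow_eq_one (by rwa [Fintype.card_fin])) hz fun i => ?_
  have hcomm := h.commute z hzc i
  rw [← hE.apply_self] at hcomm ⊢
  exact exists_mul_eq_smul_of_commute (hYX i) hcomm

theorem IsFrame.det_diagUnit [NeZero m] (h : IsFrame (innerAut k u⁻¹) (formAdjoint J) m ζ c e)
    (hτ : IsGradedInvolution (innerAut k u⁻¹) (formAdjoint J) m) (hYX : ∀ i, Y i * X i = 1)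
    (hE : IsMatrixUnits (innerAut k u⁻¹) (formAdjoint J) m e fun i l => X i * Y l)
    (hm : Even m) (hum : u ^ m = 1) (i : Fin r) :
    (h.diagUnit hτ.pow_eq_one rfl i : Matrix N N k).det = -1 := by
  have horth := h.orthTranslates i i
  rw [diagUnit, coe_blockUnit]
  simp only [← hE.apply_self] at horth ⊢
  exact horth.det_eq_neg_one hm rfl hum (hYX i)

end

variable [NeZero m] [IsAlgClosed k]

theorem IsFrame.littleWeylSet_eq_of_pow_eq_neg_one
    (h : IsFrame (innerAut k u⁻¹) (formAdjoint J) m ζ c e)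
    (hτ : IsGradedInvolution (innerAut k u⁻¹) (formAdjoint J) m) (hJ : IsUnit J.det)
    (hsymm : Jᵀ = J) (h2 : (2 : k) ≠ 0) (hm : Even m) (hζ : IsPrimitiveRoot ζ m)
    (hc : IsRootMaximal (innerAut k u⁻¹) (formAdjoint J) m ζ c) (hmem : u ∈ hτ.isometryGroup)
    (hum : (u : Matrix N N k) ^ m = -1) :
    littleWeylSet {h : Matrix N N k | hᵀ * J * h = J ∧ h.det = 1 ∧ h * u = u * h} c
      (fun i => lagrangeResolvent (innerAut k u⁻¹) m ζ (e i)) = GmqrSet k m 1 r := by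
  have hdet (z) (hz : z ∈ hτ.isometryGroup) : detMonoidHom (z : Matrix N N k) = 1 := by
    have huz : Commute (z : Matrix N N k) u :=
      ((exists_mem_isometryGroup_coe_eq_iff hτ hJ).1 ⟨z, hz, rfl⟩).2
    have hsq : (u : Matrix N N k) ^ (m / 2) * (u : Matrix N N k) ^ (m / 2) = -1 := by
      rw [← pow_add, ← two_mul, Nat.two_mul_div_two_of_even hm, hum]
    refine hτ.map_eq_one_of_mul_self_eq_neg_one (det_formAdjoint hJ) h2 hsq ?_ hz
      (huz.pow_right _)
    have hadj := (pow_mem hmem (m / 2)).2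
    rw [Units.val_pow_eq_pow_val] at hadj
    rw [hadj, Units.inv_eq_of_mul_eq_one_right]
    rw [Units.val_pow_eq_pow_val, mul_neg, hsq, neg_neg]
  obtain ⟨X, Y, -, hE⟩ := h.exists_mul_eq_one_of_pow_eq_neg_one h2 hJ hsymm hτ hc hζ hm rfl hmem hum
  rw [← image_isometryGroup_eq hτ hJ]
  refine h.littleWeylSet_eq_of_forall_commute hτ rfl hE hc.le hζ hm hmem (det_innerAut u⁻¹)
    (fun i => ?_) fun z hz _ => hdet z hz
  rw [hdet _ (h.diagUnit_mem_isometryGroup hτ rfl hmem i), Nat.div_one, hζ.pow_eq_one]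

theorem IsFrame.littleWeylSet_eq_of_det_eq_neg_one
    (h : IsFrame (innerAut k u⁻¹) (formAdjoint J) m ζ c e)
    (hτ : IsGradedInvolution (innerAut k u⁻¹) (formAdjoint J) m) (hJ : IsUnit J.det)
    (hsymm : Jᵀ = J) (h2 : (2 : k) ≠ 0) (hm : Even m) (hζ : IsPrimitiveRoot ζ m)
    (hc : IsRootMaximal (innerAut k u⁻¹) (formAdjoint J) m ζ c) (hmem : u ∈ hτ.isometryGroup)
    (hum : (u : Matrix N N k) ^ m = 1)
    {x : Matrix N N k} (hx : xᵀ * J * x = J) (hdet : x.det = -1) (hxu : x * u = u * x)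
    (hxc : ∀ y ∈ c, x * y = y * x) :
    littleWeylSet {h : Matrix N N k | hᵀ * J * h = J ∧ h.det = 1 ∧ h * u = u * h} c
      (fun i => lagrangeResolvent (innerAut k u⁻¹) m ζ (e i)) = GmqrSet k m 1 r := by
  obtain ⟨X, Y, hYX, hE⟩ := h.exists_mul_eq_one_of_pow_eq_one h2 hJ hsymm hτ hc hζ hm rfl hmem hum
  obtain ⟨z, hz, rfl⟩ := (exists_mem_isometryGroup_coe_eq_iff hτ hJ).2 ⟨hx, hxu⟩
  rw [← image_isometryGroup_eq hτ hJ]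
  refine h.littleWeylSet_eq_of_exists_commute hτ rfl hE hc.le hζ hm hmem (q := 2) (det_innerAut u⁻¹)
    (det_formAdjoint hJ) (fun i => ?_) hz hxc hdet
  exact (h.det_diagUnit hτ hYX hE hm (Units.ext hum) i).trans (pow_div_two_eq_neg_one hζ hm).symm

theorem IsFrame.littleWeylSet_eq_of_not_exists
    (h : IsFrame (innerAut k u⁻¹) (formAdjoint J) m ζ c e)
    (hτ : IsGradedInvolution (innerAut k u⁻¹) (formAdjoint J) m) (hJ : IsUnit J.det)
    (hsymm : Jᵀ = J) (h2 : (2 : k) ≠ 0) (hm : Even m) (hζ : IsPrimitiveRoot ζ m)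
    (hc : IsRootMaximal (innerAut k u⁻¹) (formAdjoint J) m ζ c) (hmem : u ∈ hτ.isometryGroup)
    (hum : (u : Matrix N N k) ^ m = 1)
    (hx : ¬(Fintype.card N > m * r ∧ ∃ x : Matrix N N k, xᵀ * J * x = J ∧ x.det = -1 ∧
      x * u = u * x ∧ ∀ y ∈ c, x * y = y * x)) :
    littleWeylSet {h : Matrix N N k | hᵀ * J * h = J ∧ h.det = 1 ∧ h * u = u * h} c
      (fun i => lagrangeResolvent (innerAut k u⁻¹) m ζ (e i)) = GmqrSet k m 2 r := by
  obtain ⟨X, Y, hYX, hE⟩ := h.exists_mul_eq_one_of_pow_eq_one h2 hJ hsymm hτ hc hζ hm rfl hmem hum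
  rw [← image_isometryGroup_eq hτ hJ]
  refine h.littleWeylSet_eq_of_forall_commute hτ rfl hE hc.le hζ hm hmem (det_innerAut u⁻¹)
    (fun i => ?_) fun z hz hzc => ?_
  · exact (h.det_diagUnit hτ hYX hE hm (Units.ext hum) i).trans
      (pow_div_two_eq_neg_one hζ hm).symm
  · rcases le_or_gt (Fintype.card N) (m * r) with hcard | hcard
    · exact h.det_eq_one_of_card_le hτ hYX hE hm hcard hz hzc
    · refine (mul_self_eq_one_iff.1 (hτ.map_mul_self_eq_one (χ := detMonoidHom)
        (det_formAdjoint hJ) hz)).resolve_right fun hdet => hx ⟨hcard, z, ?_⟩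
      obtain ⟨hzO, hzu⟩ := (exists_mem_isometryGroup_coe_eq_iff hτ hJ).1 ⟨z, hz, rfl⟩
      exact ⟨hzO, hdet, hzu, hzc⟩

end OrthogonalGroup

section Antidiagonal

variable {k : Type*} [Field k]

theorem antidiagJ_eq_permMatrix (n : ℕ) : antidiagJ k n = Equiv.Perm.permMatrix k Fin.revPerm := by
  ext i j
  rw [antidiagJ, of_apply, Equiv.Perm.permMatrix, PEquiv.toMatrix_apply]
  refine if_congr ?_ rfl rfl
  simp only [Equiv.toPEquiv_apply, Fin.revPerm_apply, Option.mem_some_iff, Fin.ext_iff, Fin.val_rev]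
  omega

theorem transpose_antidiagJ (n : ℕ) : (antidiagJ k n)ᵀ = antidiagJ k n := by
  ext i j
  simp only [antidiagJ, transpose_apply, of_apply, add_comm]

theorem isUnit_det_antidiagJ (n : ℕ) : IsUnit (antidiagJ k n).det := by
  rw [antidiagJ_eq_permMatrix, det_permutation]
  exact (Units.isUnit _).map (Int.castRingHom k)

end Antidiagonal

theorem two_ne_zero_of_ringChar {k : Type*} [Field k] (h : ringChar k = 0 ∨ 2 < ringChar k) :
    (2 : k) ≠ 0 := by
  refine Ring.two_ne_zero ?_
  omega

theorem stmt14_general {k N : Type*} [Field k] [IsAlgClosed k] [Fintype N] [DecidableEq N]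
    (h2 : (2 : k) ≠ 0) {J : Matrix N N k} (hJ : IsUnit J.det) (hsymm : Jᵀ = J) {m : ℕ}
    (hm : 0 < m) (hmeven : Even m) {ζ : k} (hζ : IsPrimitiveRoot ζ m) {u : Matrix N N k}
    (huO : uᵀ * J * u = J) (hum : u ^ m = 1 ∨ u ^ m = -1) {c : Submodule k (Matrix N N k)}
    (hc : IsCartanSubspace {x | xᵀ * J + J * x = 0 ∧ u * x * u⁻¹ = ζ • x} c) {r : ℕ}
    (hr : Module.finrank k c = r) :
    ∃ b : Fin r → Matrix N N k, LinearIndependent k b ∧ Submodule.span k (Set.range b) = c ∧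
      (u ^ m = -1 →
        littleWeylSet {h : Matrix N N k | hᵀ * J * h = J ∧ h.det = 1 ∧ h * u = u * h} c b =
          GmqrSet k m 1 r) ∧
      (u ^ m = 1 →
        ((Fintype.card N > m * r ∧ ∃ x : Matrix N N k, xᵀ * J * x = J ∧ x.det = -1 ∧
            x * u = u * x ∧ ∀ y ∈ c, x * y = y * x) →
          littleWeylSet {h : Matrix N N k | hᵀ * J * h = J ∧ h.det = 1 ∧ h * u = u * h} c b =
            GmqrSet k m 1 r) ∧
        (¬(Fintype.card N > m * r ∧ ∃ x : Matrix N N k, xᵀ * J * x = J ∧ x.det = -1 ∧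
            x * u = u * x ∧ ∀ y ∈ c, x * y = y * x) →
          littleWeylSet {h : Matrix N N k | hᵀ * J * h = J ∧ h.det = 1 ∧ h * u = u * h} c b =
            GmqrSet k m 2 r)) := by
  have : NeZero m := ⟨hm.ne'⟩
  have : NeZero (m : k) := hζ.neZero'
  have hu := (formAdjoint_mul_self_eq_one_iff hJ).2 huO
  obtain ⟨u, rfl⟩ : IsUnit u := .of_mul_eq_one_right _ hu
  have hτ := isGradedInvolution_formAdjoint hJ hsymm huO hum
  obtain ⟨g, hmem, hgu⟩ := (exists_mem_isometryGroup_coe_eq_iff hτ hJ).2 ⟨huO, rfl⟩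
  obtain rfl := Units.ext hgu
  rw [setOf_skew_eq_skewEigenspace hJ] at hc
  have hmax : IsRootMaximal (innerAut k g⁻¹) (formAdjoint J) m ζ c :=
    ⟨hc.1, fun _ => hc.mem_of_pow_succ_eq_self⟩
  obtain ⟨W, E, hWE⟩ := hc.exists_isWeightFamily
  obtain ⟨e, h⟩ := hWE.exists_isFrame hτ hmax hζ hmeven
  subst hr
  refine ⟨_, h.linearIndependent, h.span_eq, fun hum =>
    h.littleWeylSet_eq_of_pow_eq_neg_one hτ hJ hsymm h2 hmeven hζ hmax hmem hum, fun hum =>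
    ⟨fun ⟨_, x, hx, hdet, hxu, hxc⟩ => ?_, fun hx => ?_⟩⟩
  · exact h.littleWeylSet_eq_of_det_eq_neg_one hτ hJ hsymm h2 hmeven hζ hmax hmem hum hx hdet hxu
      hxc
  · exact h.littleWeylSet_eq_of_not_exists hτ hJ hsymm h2 hmeven hζ hmax hmem hum hx

/-- little Weyl group of an inner automorphism of `SO(2n,k)` of
even order exactly `m`, given by `u ∈ O(2n,k)` with `u^m = ±I`: with respect
to a suitable basis of a Cartan subspace `c` (of dimension `r`), if `u^m = -I`
it equals `G(m,1,r)`; if `u^m = I` it equals `G(m,1,r)` when `n > mr/2` and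
some `x ∈ O(2n,k)` of determinant `-1` commutes with `u` and with every
element of `c`, and `G(m,2,r)` otherwise. -/
theorem stmt14 {k : Type*} [Field k] [IsAlgClosed k]
    (hchar : ringChar k = 0 ∨ 2 < ringChar k)
    (m : ℕ) (hm : 0 < m) (hmeven : Even m) (hmchar : ¬ (ringChar k ∣ m))
    (ζ : k) (hζ : IsPrimitiveRoot ζ m)
    (n : ℕ) (hn : 2 ≤ n)
    (u : Matrix (Fin (2 * n)) (Fin (2 * n)) k)
    (huO : u.transpose * antidiagJ k (2 * n) * u = antidiagJ k (2 * n))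
    (hordm : u ^ m = 1 ∨ u ^ m = -1)
    (hordleast : ∀ j : ℕ, 0 < j → j < m → u ^ j ≠ 1 ∧ u ^ j ≠ -1)
    (c : Submodule k (Matrix (Fin (2 * n)) (Fin (2 * n)) k))
    (hc : IsCartanSubspace
      {x | x.transpose * antidiagJ k (2 * n) + antidiagJ k (2 * n) * x = 0 ∧
        u * x * u⁻¹ = ζ • x} c)
    (r : ℕ) (hr : Module.finrank k c = r) :
    ∃ b : Fin r → Matrix (Fin (2 * n)) (Fin (2 * n)) k,
      LinearIndependent k b ∧ Submodule.span k (Set.range b) = c ∧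
      (u ^ m = -1 →
        littleWeylSet
          {h | h.transpose * antidiagJ k (2 * n) * h = antidiagJ k (2 * n) ∧
            h.det = 1 ∧ h * u = u * h} c b = GmqrSet k m 1 r) ∧
      (u ^ m = 1 →
        ((2 * n > m * r ∧ ∃ x : Matrix (Fin (2 * n)) (Fin (2 * n)) k,
            x.transpose * antidiagJ k (2 * n) * x = antidiagJ k (2 * n) ∧
            x.det = -1 ∧ x * u = u * x ∧ ∀ y ∈ c, x * y = y * x) →
          littleWeylSet
            {h | h.transpose * antidiagJ k (2 * n) * h = antidiagJ k (2 * n) ∧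
              h.det = 1 ∧ h * u = u * h} c b = GmqrSet k m 1 r) ∧
        (¬ (2 * n > m * r ∧ ∃ x : Matrix (Fin (2 * n)) (Fin (2 * n)) k,
            x.transpose * antidiagJ k (2 * n) * x = antidiagJ k (2 * n) ∧
            x.det = -1 ∧ x * u = u * x ∧ ∀ y ∈ c, x * y = y * x) →
          littleWeylSet
            {h | h.transpose * antidiagJ k (2 * n) * h = antidiagJ k (2 * n) ∧
              h.det = 1 ∧ h * u = u * h} c b = GmqrSet k m 2 r)) := by
  simpa only [Fintype.card_fin] using stmt14_general (two_ne_zero_of_ringChar hchar)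
    (isUnit_det_antidiagJ _) (transpose_antidiagJ _) hm hmeven hζ huO hordm hc hr
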